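/- arXiv:2009.01425 — 4 statements merged into one kernel-verified Lean document; each statement's English description precedes it below -/
import Mathlib

section
/- If A₀ + A₁ ≥ 1, then the sequence of approximants μ_N converges weakly as N → ∞ to a Borel probability measure μ on ℝ concentrated on [0,1]; in particular the ghost measure of f exists. -/
open MeasureTheory Filter Topology

/-- The `N`-th approximant to the ghost measure of `f`: the normalised Dirac comb built from
the values of `f` on the fundamental region `[2^N, 2^(N+1))`. -/
noncomputable def ghostApprox (f : ℕ → ℕ) (N : ℕ) : Measure ℝ :=
  (∑ n ∈ Finset.range (2 ^ N), (f (2 ^ N + n) : ENNReal))⁻¹ •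
    ∑ n ∈ Finset.range (2 ^ N), (f (2 ^ N + n) : ENNReal) • Measure.dirac ((n : ℝ) / 2 ^ N)

/-- Weak (vague) convergence of a sequence of finite measures on `ℝ`. -/
def WeakLimit (μs : ℕ → Measure ℝ) (μ : Measure ℝ) : Prop :=
  ∀ g : BoundedContinuousFunction ℝ ℝ,
    Tendsto (fun N => ∫ x, g x ∂(μs N)) atTop (𝓝 (∫ x, g x ∂μ))
lemma gm_pos_part (m θ e : ℕ → ℝ) (h0 : ∀ N, 0 ≤ θ N) (h1 : ∀ N, θ N ≤ 1)
    (he0 : ∀ N, 0 ≤ e N) (he : Summable e) (hm : ∀ N, |m (N+1) - θ N * m N| ≤ e N) :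
    ∃ l, Tendsto (fun N => max (m N) 0) atTop (𝓝 l) := by
  have hanti : Antitone (fun N => max (m N) 0 - ∑ k ∈ Finset.range N, e k) := by
    apply antitone_nat_of_succ_le
    intro N
    rw [Finset.sum_range_succ]
    have h2 := (abs_le.1 (hm N)).2
    have h3 : θ N * m N ≤ max (m N) 0 := by
      calc θ N * m N ≤ θ N * max (m N) 0 := mul_le_mul_of_nonneg_left (le_max_left _ _) (h0 N)
        _ ≤ 1 * max (m N) 0 := mul_le_mul_of_nonneg_right (h1 N) (le_max_right _ _)
        _ = _ := one_mul _
    have h4 : max (m (N+1)) 0 ≤ max (m N) 0 + e N :=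
      max_le (by linarith) (add_nonneg (le_max_right _ _) (he0 N))
    linarith
  have hb : BddBelow (Set.range (fun N => max (m N) 0 - ∑ k ∈ Finset.range N, e k)) := by
    refine ⟨-(∑' k, e k), ?_⟩
    rintro _ ⟨N, rfl⟩
    have := he.sum_le_tsum (Finset.range N) (fun i _ => he0 i)
    have h5 := le_max_right (m N) 0
    simp only
    linarith
  have := (tendsto_atTop_ciInf hanti hb).add he.hasSum.tendsto_sum_nat
  refine ⟨_, this.congr fun N => ?_⟩
  ring

lemma gm_conv (m θ e : ℕ → ℝ) (h0 : ∀ N, 0 ≤ θ N) (h1 : ∀ N, θ N ≤ 1)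
    (he0 : ∀ N, 0 ≤ e N) (he : Summable e) (hm : ∀ N, |m (N+1) - θ N * m N| ≤ e N) :
    ∃ l, Tendsto m atTop (𝓝 l) := by
  obtain ⟨p, hp⟩ := gm_pos_part m θ e h0 h1 he0 he hm
  obtain ⟨q, hq⟩ := gm_pos_part (fun N => - m N) θ e h0 h1 he0 he (fun N => by
    have := hm N
    rw [← abs_neg] at this
    convert this using 2
    ring)
  refine ⟨p - q, (hp.sub hq).congr fun N => ?_⟩
  rcases le_total (m N) 0 with h | h
  · rw [max_eq_right h, max_eq_left (by linarith)]; ring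
  · rw [max_eq_left h, max_eq_right (by linarith)]; ring

lemma gm_sum_two (h : ℕ → ℝ) (M : ℕ) :
    ∑ n ∈ Finset.range (2 * M), h n = ∑ n ∈ Finset.range M, (h (2 * n) + h (2 * n + 1)) := by
  induction M with
  | zero => simp
  | succ k ih =>
    rw [show 2 * (k + 1) = 2 * k + 1 + 1 by ring, Finset.sum_range_succ, Finset.sum_range_succ,
      Finset.sum_range_succ, ih]
    ring

noncomputable def gmS (f : ℕ → ℕ) (N : ℕ) : ℝ := ∑ n ∈ Finset.range (2 ^ N), (f (2 ^ N + n) : ℝ)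
noncomputable def gmL (f : ℕ → ℕ) (g : ℝ → ℝ) (N : ℕ) : ℝ :=
  ∑ n ∈ Finset.range (2 ^ N), (f (2 ^ N + n) : ℝ) * g ((n : ℝ) / 2 ^ N)
noncomputable def gmR (g : ℝ → ℝ) (N : ℕ) : ℝ :=
  (∑ n ∈ Finset.range (2 ^ N), g ((n : ℝ) / 2 ^ N)) / 2 ^ N

lemma gm_lip (g : ℝ → ℝ) (K : ℝ) (hg : ∀ x y, |g x - g y| ≤ K * |x - y|) (N n : ℕ) :
    |g (((2 * n + 1 : ℕ) : ℝ) / 2 ^ (N + 1)) - g ((n : ℝ) / 2 ^ N)| ≤ K / 2 ^ (N + 1) := by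
  refine (hg _ _).trans (le_of_eq ?_)
  have : ((2 * n + 1 : ℕ) : ℝ) / 2 ^ (N + 1) - (n : ℝ) / 2 ^ N = 1 / 2 ^ (N + 1) := by
    push_cast
    field_simp
    ring
  rw [this, abs_of_nonneg (by positivity)]
  ring

lemma gm_even_pt (N n : ℕ) : ((2 * n : ℕ) : ℝ) / 2 ^ (N + 1) = (n : ℝ) / 2 ^ N := by
  push_cast
  field_simp
  ring

lemma gm_R_step (g : ℝ → ℝ) (K : ℝ) (hg : ∀ x y, |g x - g y| ≤ K * |x - y|) (N : ℕ) :
    |gmR g (N + 1) - gmR g N| ≤ K / 2 ^ (N + 1) := by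
  have hK : 0 ≤ K := by simpa using (abs_nonneg _).trans (hg 1 0)
  have : gmR g (N + 1) - gmR g N = (∑ n ∈ Finset.range (2 ^ N),
      (g (((2 * n + 1 : ℕ) : ℝ) / 2 ^ (N + 1)) - g ((n : ℝ) / 2 ^ N))) / 2 ^ (N + 1) := by
    unfold gmR
    rw [show Finset.range (2 ^ (N + 1)) = Finset.range (2 * 2 ^ N) by rw [pow_succ'], gm_sum_two]
    simp_rw [gm_even_pt]
    rw [Finset.sum_add_distrib, Finset.sum_sub_distrib]
    field_simp
    ring
  rw [this, abs_div, abs_of_pos (show (0 : ℝ) < 2 ^ (N + 1) by positivity)]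
  rw [div_le_div_iff_of_pos_right (by positivity)]
  calc _ ≤ ∑ n ∈ Finset.range (2 ^ N), K / 2 ^ (N + 1) :=
        (Finset.abs_sum_le_sum_abs _ _).trans (Finset.sum_le_sum fun n _ => gm_lip g K hg N n)
    _ = K / 2 := by
        rw [Finset.sum_const, Finset.card_range, nsmul_eq_mul]
        push_cast
        field_simp
        ring
    _ ≤ K := by linarith

lemma gm_fe (f : ℕ → ℕ) (A₀ b₀ : ℕ)
    (heven : ∀ n, 1 ≤ n → f (2 * n) = A₀ * f n + b₀)
    (N n : ℕ) : (f (2 ^ (N + 1) + 2 * n) : ℝ) = A₀ * f (2 ^ N + n) + b₀ := by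
  rw [show 2 ^ (N + 1) + 2 * n = 2 * (2 ^ N + n) by ring,
    heven _ (Nat.le_add_right_of_le Nat.one_le_two_pow)]
  push_cast
  rfl

lemma gm_fo (f : ℕ → ℕ) (A₁ b₁ : ℕ)
    (hodd : ∀ n, 1 ≤ n → f (2 * n + 1) = A₁ * f n + b₁)
    (N n : ℕ) : (f (2 ^ (N + 1) + (2 * n + 1)) : ℝ) = A₁ * f (2 ^ N + n) + b₁ := by
  rw [show 2 ^ (N + 1) + (2 * n + 1) = 2 * (2 ^ N + n) + 1 by ring,
    hodd _ (Nat.le_add_right_of_le Nat.one_le_two_pow)]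
  push_cast
  rfl

lemma gm_S_step (f : ℕ → ℕ) (A₀ A₁ b₀ b₁ : ℕ)
    (heven : ∀ n, 1 ≤ n → f (2 * n) = A₀ * f n + b₀)
    (hodd : ∀ n, 1 ≤ n → f (2 * n + 1) = A₁ * f n + b₁)
    (N : ℕ) :
    gmS f (N + 1) = (A₀ + A₁) * gmS f N + (b₀ + b₁) * 2 ^ N := by
  have : gmS f (N + 1) = ∑ n ∈ Finset.range (2 ^ N),
      ((A₀ + A₁) * (f (2 ^ N + n) : ℝ) + (b₀ + b₁)) := by
    unfold gmS
    rw [show Finset.range (2 ^ (N + 1)) = Finset.range (2 * 2 ^ N) by rw [pow_succ'], gm_sum_two]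
    refine Finset.sum_congr rfl fun n _ => ?_
    rw [gm_fe f A₀ b₀ heven, gm_fo f A₁ b₁ hodd]
    ring
  rw [this, Finset.sum_add_distrib, ← Finset.mul_sum, Finset.sum_const, Finset.card_range,
    nsmul_eq_mul]
  unfold gmS
  push_cast
  ring

lemma gm_L_step (f : ℕ → ℕ) (A₀ A₁ b₀ b₁ : ℕ)
    (heven : ∀ n, 1 ≤ n → f (2 * n) = A₀ * f n + b₀)
    (hodd : ∀ n, 1 ≤ n → f (2 * n + 1) = A₁ * f n + b₁)
    (g : ℝ → ℝ) (K : ℝ) (hg : ∀ x y, |g x - g y| ≤ K * |x - y|) (N : ℕ) :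
    |gmL f g (N + 1) - ((A₀ + A₁) * gmL f g N + (b₀ + b₁) * 2 ^ N * gmR g N)|
      ≤ gmS f (N + 1) * (K / 2 ^ (N + 1)) := by
  have hK : 0 ≤ K := by simpa using (abs_nonneg _).trans (hg 1 0)
  have : gmL f g (N + 1) - ((A₀ + A₁) * gmL f g N + (b₀ + b₁) * 2 ^ N * gmR g N) =
      ∑ n ∈ Finset.range (2 ^ N), (A₁ * (f (2 ^ N + n) : ℝ) + b₁) *
      (g (((2 * n + 1 : ℕ) : ℝ) / 2 ^ (N + 1)) - g ((n : ℝ) / 2 ^ N)) := by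
    have hR : (b₀ + b₁ : ℝ) * 2 ^ N * gmR g N =
        ∑ n ∈ Finset.range (2 ^ N), (b₀ + b₁ : ℝ) * g ((n : ℝ) / 2 ^ N) := by
      unfold gmR
      rw [← Finset.mul_sum]
      field_simp
    rw [hR]
    unfold gmL
    rw [show Finset.range (2 ^ (N + 1)) = Finset.range (2 * 2 ^ N) by rw [pow_succ'], gm_sum_two,
      Finset.mul_sum, ← Finset.sum_add_distrib, ← Finset.sum_sub_distrib]
    refine Finset.sum_congr rfl fun n _ => ?_
    rw [gm_fe f A₀ b₀ heven, gm_fo f A₁ b₁ hodd, gm_even_pt]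
    ring
  rw [this]
  calc _ ≤ ∑ n ∈ Finset.range (2 ^ N), (A₁ * (f (2 ^ N + n) : ℝ) + b₁) * (K / 2 ^ (N + 1)) := by
        refine (Finset.abs_sum_le_sum_abs _ _).trans (Finset.sum_le_sum fun n _ => ?_)
        rw [abs_mul, abs_of_nonneg (show (0 : ℝ) ≤ A₁ * (f (2 ^ N + n) : ℝ) + b₁ by positivity)]
        exact mul_le_mul_of_nonneg_left (gm_lip g K hg N n) (by positivity)
    _ ≤ _ := by
        rw [← Finset.sum_mul]
        refine mul_le_mul_of_nonneg_right ?_ (by positivity)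
        unfold gmS
        rw [show Finset.range (2 ^ (N + 1)) = Finset.range (2 * 2 ^ N) by rw [pow_succ'],
          gm_sum_two]
        refine Finset.sum_le_sum fun n _ => ?_
        rw [gm_fo f A₁ b₁ hodd]
        have : (0 : ℝ) ≤ f (2 ^ (N + 1) + 2 * n) := by positivity
        linarith

lemma gm_S_pos (f : ℕ → ℕ) (A₀ A₁ b₀ b₁ : ℕ)
    (heven : ∀ n, 1 ≤ n → f (2 * n) = A₀ * f n + b₀)
    (hodd : ∀ n, 1 ≤ n → f (2 * n + 1) = A₁ * f n + b₁)
    (hf1 : 1 ≤ f 1) (hA : 1 ≤ A₀ + A₁) (N : ℕ) : 0 < gmS f N := by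
  induction N with
  | zero => simp [gmS]; omega
  | succ k ih =>
    rw [gm_S_step f A₀ A₁ b₀ b₁ heven hodd]
    have : (1 : ℝ) ≤ A₀ + A₁ := by exact_mod_cast hA
    positivity

lemma gm_main (f : ℕ → ℕ) (A₀ A₁ b₀ b₁ : ℕ)
    (heven : ∀ n, 1 ≤ n → f (2 * n) = A₀ * f n + b₀)
    (hodd : ∀ n, 1 ≤ n → f (2 * n + 1) = A₁ * f n + b₁)
    (hf1 : 1 ≤ f 1) (hA : 1 ≤ A₀ + A₁) (g : ℝ → ℝ) (K : ℝ)
    (hg : ∀ x y, |g x - g y| ≤ K * |x - y|) :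
    ∃ l, Tendsto (fun N => gmL f g N / gmS f N) atTop (𝓝 l) := by
  have hK : 0 ≤ K := by simpa using (abs_nonneg _).trans (hg 1 0)
  have hS := gm_S_pos f A₀ A₁ b₀ b₁ heven hodd hf1 hA
  have hsum : Summable (fun N : ℕ => K / 2 ^ N) := by
    simpa [div_eq_mul_inv] using (summable_geometric_two.mul_left K)
  have hle : ∀ N : ℕ, K / 2 ^ (N + 1) + K / 2 ^ (N + 1) = K / 2 ^ N := fun N => by
    field_simp
    ring
  obtain ⟨r, hr⟩ := gm_conv (gmR g) (fun _ => 1) (fun N => K / 2 ^ N) (by simp) (by simp)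
    (fun N => by positivity) hsum (fun N => by
      have := gm_R_step g K hg N
      have h2 : 0 ≤ K / 2 ^ (N + 1) := by positivity
      rw [one_mul]
      linarith [hle N])
  obtain ⟨d, hd⟩ := gm_conv (fun N => gmL f g N / gmS f N - gmR g N)
    (fun N => (A₀ + A₁) * gmS f N / gmS f (N + 1)) (fun N => K / 2 ^ N)
    (fun N => by have := hS N; have := hS (N + 1); positivity)
    (fun N => by
      rw [div_le_one (hS (N + 1)), gm_S_step f A₀ A₁ b₀ b₁ heven hodd]
      have : (0 : ℝ) ≤ (b₀ + b₁) * 2 ^ N := by positivity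
      linarith)
    (fun N => by positivity) hsum (fun N => by
      have h1 := gm_R_step g K hg N
      have h2 := gm_L_step f A₀ A₁ b₀ b₁ heven hodd g K hg N
      have hs := gm_S_step f A₀ A₁ b₀ b₁ heven hodd N
      have p0 := hS N
      have p1 := hS (N + 1)
      have key : gmL f g (N + 1) / gmS f (N + 1) - gmR g (N + 1) -
          (A₀ + A₁) * gmS f N / gmS f (N + 1) * (gmL f g N / gmS f N - gmR g N) =
          (gmL f g (N + 1) - ((A₀ + A₁) * gmL f g N + (b₀ + b₁) * 2 ^ N * gmR g N))
            / gmS f (N + 1) - (gmR g (N + 1) - gmR g N) := by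
        have hb : (b₀ + b₁ : ℝ) * 2 ^ N = gmS f (N + 1) - (A₀ + A₁) * gmS f N := by linarith
        rw [hb]
        field_simp
        ring
      rw [key, ← hle N]
      refine (abs_sub _ _).trans (add_le_add ?_ h1)
      rw [abs_div, abs_of_pos p1, div_le_iff₀ p1]
      linarith)
  exact ⟨_, (hd.add hr).congr fun N => by ring⟩

lemma gm_total (f : ℕ → ℕ) (N : ℕ) (h : 0 < gmS f N) :
    IsProbabilityMeasure (ghostApprox f N) ∧ ghostApprox f N (Set.Icc (0:ℝ) 1)ᶜ = 0 := by
  have hne : (∑ n ∈ Finset.range (2 ^ N), (f (2 ^ N + n) : ENNReal)) ≠ 0 := by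
    intro h0
    have : (∑ n ∈ Finset.range (2 ^ N), f (2 ^ N + n)) = 0 := by exact_mod_cast h0
    have h2 : gmS f N = 0 := by
      unfold gmS
      exact_mod_cast this
    exact h.ne' h2
  have htop : (∑ n ∈ Finset.range (2 ^ N), (f (2 ^ N + n) : ENNReal)) ≠ ⊤ := by
    simp [ENNReal.sum_eq_top]
  refine ⟨⟨?_⟩, ?_⟩
  · simp only [ghostApprox, Measure.smul_apply, Measure.finsetSum_apply, smul_eq_mul,
      measure_univ, mul_one]
    exact ENNReal.inv_mul_cancel hne htop
  · simp only [ghostApprox, Measure.smul_apply, Measure.finsetSum_apply, smul_eq_mul]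
    refine mul_eq_zero_of_right _ (Finset.sum_eq_zero ?_)
    intro n hn
    rw [Measure.dirac_apply' _ measurableSet_Icc.compl, Set.indicator_of_notMem, mul_zero]
    simp only [Set.mem_compl_iff, not_not]
    have h3 : (n : ℝ) ≤ 2 ^ N := by exact_mod_cast (Finset.mem_range.1 hn).le
    exact ⟨by positivity, (div_le_one (by positivity)).2 h3⟩

lemma gm_integral (f : ℕ → ℕ) (N : ℕ) (g : ℝ → ℝ) :
    ∫ x, g x ∂(ghostApprox f N) = gmL f g N / gmS f N := by
  unfold ghostApprox
  rw [integral_smul_measure, integral_finsetSum_measure]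
  · simp only [integral_smul_measure, integral_dirac, ENNReal.toReal_inv, smul_eq_mul]
    rw [ENNReal.toReal_sum (by simp)]
    simp only [ENNReal.toReal_natCast]
    unfold gmL gmS
    rw [div_eq_inv_mul]
  · intro n _
    exact (integrable_dirac (by simp)).smul_measure (by simp)

theorem stmt_1 (A₀ A₁ b₀ b₁ : ℕ) (hnz : ¬(A₀ = 0 ∧ A₁ = 0 ∧ b₀ = 0 ∧ b₁ = 0))
    (f : ℕ → ℕ) (hf1 : 1 ≤ f 1)
    (heven : ∀ n, 1 ≤ n → f (2 * n) = A₀ * f n + b₀)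
    (hodd : ∀ n, 1 ≤ n → f (2 * n + 1) = A₁ * f n + b₁)
    (hA : 1 ≤ A₀ + A₁) :
    ∃ μ : Measure ℝ, IsProbabilityMeasure μ ∧ μ (Set.Icc (0:ℝ) 1)ᶜ = 0 ∧
      WeakLimit (ghostApprox f) μ := by
  have hS := gm_S_pos f A₀ A₁ b₀ b₁ heven hodd hf1 hA
  let ν : ℕ → ProbabilityMeasure ℝ := fun N => ⟨ghostApprox f N, (gm_total f N (hS N)).1⟩
  have hcomp := isCompact_setOfPred_probabilityMeasure_mass_eq_compl_isCompact_le (E := ℝ)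
    (u := fun _ => 0) (K := fun _ => Set.Icc (0:ℝ) 1) tendsto_const_nhds
    (fun _ => isCompact_Icc) (Or.inl inferInstance)
  have hmem : ∀ N, ν N ∈ {μ : ProbabilityMeasure ℝ | ∀ n : ℕ,
      μ ((fun _ => Set.Icc (0:ℝ) 1) n)ᶜ ≤ (fun _ => (0 : NNReal)) n} := by
    intro N n
    have := (gm_total f N (hS N)).2
    simp only [nonpos_iff_eq_zero]
    rw [ProbabilityMeasure.null_iff_toMeasure_null]
    exact this
  obtain ⟨μ, hμ, hlim⟩ := isCompact_iff_ultrafilter_le_nhds'.1 hcomp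
    ((hyperfilter ℕ).map ν) (Filter.mem_map.2 (Filter.univ_mem' hmem))
  have hlim' : Tendsto ν (hyperfilter ℕ : Filter ℕ) (𝓝 μ) := hlim
  refine ⟨μ, inferInstance, ?_, ?_⟩
  · have := hμ 0
    simp only [nonpos_iff_eq_zero] at this
    rwa [ProbabilityMeasure.null_iff_toMeasure_null] at this
  · have hconv : Tendsto ν atTop (𝓝 μ) := by
      rw [tendsto_iff_forall_lipschitz_integral_tendsto]
      rintro g ⟨C, hC⟩ ⟨K, hK⟩
      obtain ⟨l, hl⟩ := gm_main f A₀ A₁ b₀ b₁ heven hodd hf1 hA g K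
        (fun x y => by simpa [Real.dist_eq] using hK.dist_le_mul x y)
      have hl' : Tendsto (fun N => ∫ x, g x ∂(ν N : Measure ℝ)) atTop (𝓝 l) :=
        hl.congr fun N => (gm_integral f N g).symm
      have h1 := (ProbabilityMeasure.tendsto_iff_forall_integral_tendsto.1 hlim')
        ⟨⟨g, hK.continuous⟩, C, hC⟩
      have h2 := hl'.mono_left (Nat.hyperfilter_le_atTop)
      rwa [tendsto_nhds_unique h2 h1] at hl'
    intro g
    exact (ProbabilityMeasure.tendsto_iff_forall_integral_tendsto.1 hconv) g
end

section
/- If b₀ = b₁ = 0, A₀ ≠ A₁ and A₀, A₁ ≥ 1, then the approximants μ_N converge weakly to a probability measure μ that is singular continuous: μ is mutually singular with Lebesgue measure λ and μ({x}) = 0 for every x ∈ ℝ. -/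
open MeasureTheory Filter Topology

/-- Integer formed by the first `N` binary digits of `c`. -/
def preN (c : ℕ → Bool) : ℕ → ℕ
  | 0 => 0
  | N + 1 => 2 * preN c N + (c N).toNat

/-- The weight of a digit. -/
def dw (p q : ℝ) (b : Bool) : ℝ := if b then q else p

/-- The biased coin. -/
noncomputable def coin (p q : ℝ) : Measure Bool :=
  ENNReal.ofReal p • Measure.dirac false + ENNReal.ofReal q • Measure.dirac true

/-- The Bernoulli product measure. -/
noncomputable def bern (p q : ℝ) : Measure (ℕ → Bool) := Measure.infinitePi (fun _ => coin p q)

/-- The real number with binary digits `c`. -/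
noncomputable def binX (c : ℕ → Bool) : ℝ := ⨆ N, (preN c N : ℝ) / 2 ^ N

lemma coin_prob {p q : ℝ} (hp : 0 < p) (hq : 0 < q) (h : p + q = 1) :
    IsProbabilityMeasure (coin p q) := by
  constructor
  simp [coin, ← ENNReal.ofReal_add hp.le hq.le, h]

lemma coin_singleton (p q : ℝ) (b : Bool) : coin p q {b} = ENNReal.ofReal (dw p q b) := by
  cases b <;> simp [coin, dw]

lemma preN_lt (c : ℕ → Bool) (N : ℕ) : preN c N < 2 ^ N := by
  induction N with
  | zero => simp [preN]
  | succ N ih =>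
    have := Bool.toNat_le (c N)
    simp only [preN, pow_succ]; omega

lemma preN_eq_iff (c d : ℕ → Bool) (N : ℕ) : preN c N = preN d N ↔ ∀ k < N, c k = d k := by
  induction N with
  | zero => simp [preN]
  | succ N ih =>
    have h1 := Bool.toNat_le (c N)
    have h2 := Bool.toNat_le (d N)
    have : preN c (N+1) = preN d (N+1) ↔ preN c N = preN d N ∧ c N = d N := by
      simp only [preN]
      constructor
      · intro h
        refine ⟨by omega, ?_⟩
        have : (c N).toNat = (d N).toNat := by omega
        revert this; cases c N <;> cases d N <;> simp
      · rintro ⟨a, b⟩; rw [a, b]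
    rw [this, ih]
    constructor
    · rintro ⟨a, b⟩ k hk
      rcases Nat.lt_succ_iff_lt_or_eq.mp hk with h | h
      · exact a k h
      · rw [h, b]
    · intro h
      exact ⟨fun k hk => h k (by omega), h N (by omega)⟩

lemma preN_surj (N n : ℕ) (hn : n < 2 ^ N) : ∃ c, preN c N = n := by
  induction N generalizing n with
  | zero => exact ⟨fun _ => false, by simp [preN]; simp at hn; omega⟩
  | succ N ih =>
    obtain ⟨c, hc⟩ := ih (n / 2) (by rw [pow_succ] at hn; omega)
    refine ⟨Function.update c N (decide (n % 2 = 1)), ?_⟩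
    have h1 : preN (Function.update c N (decide (n % 2 = 1))) N = preN c N := by
      rw [preN_eq_iff]
      intro k hk
      simp [Function.update_of_ne hk.ne]
    simp only [preN, h1, hc, Function.update_self]
    rcases Nat.mod_two_eq_zero_or_one n with h | h <;> simp [h] <;> omega

lemma preN_meas (N : ℕ) : Measurable (fun c => preN c N) := by
  induction N with
  | zero => simp [preN]
  | succ N ih =>
    simp only [preN]
    have : Measurable (fun c : ℕ → Bool => (c N).toNat) :=
      (measurable_of_countable Bool.toNat).comp (measurable_pi_apply N)
    exact (ih.const_mul 2).add this

lemma bern_cyl {p q : ℝ} (hp : 0 < p) (hq : 0 < q) (h : p + q = 1) (c : ℕ → Bool) (N : ℕ) :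
    bern p q {d | preN d N = preN c N} = ENNReal.ofReal (∏ k ∈ Finset.range N, dw p q (c k)) := by
  have := coin_prob hp hq h
  have e : {d | preN d N = preN c N} =
      Set.pi (Finset.range N : Set ℕ) (fun k => ({c k} : Set Bool)) := by
    ext d
    simp [preN_eq_iff, Set.mem_pi]
  rw [e, bern, Measure.infinitePi_pi _ (by intros; exact measurableSet_singleton _),
    ENNReal.ofReal_prod_of_nonneg]
  · simp [coin_singleton]
  · intro k _
    unfold dw; split_ifs <;> positivity

lemma W_preN {p q : ℝ} {W : ℕ → ℕ → ℝ} (h0 : W 0 0 = 1)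
    (he : ∀ N n, W (N+1) (2*n) = p * W N n) (ho : ∀ N n, W (N+1) (2*n+1) = q * W N n)
    (c : ℕ → Bool) (N : ℕ) : W N (preN c N) = ∏ k ∈ Finset.range N, dw p q (c k) := by
  induction N with
  | zero => simpa [preN] using h0
  | succ N ih =>
    rw [Finset.prod_range_succ, ← ih]
    simp only [preN, dw]
    cases c N <;> simp [he, ho] <;> ring

lemma bern_W {p q : ℝ} (hp : 0 < p) (hq : 0 < q) (h : p + q = 1)
    {W : ℕ → ℕ → ℝ} (h0 : W 0 0 = 1)
    (he : ∀ N n, W (N+1) (2*n) = p * W N n) (ho : ∀ N n, W (N+1) (2*n+1) = q * W N n)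
    (N n : ℕ) (hn : n < 2 ^ N) :
    bern p q {d | preN d N = n} = ENNReal.ofReal (W N n) := by
  obtain ⟨c, rfl⟩ := preN_surj N n hn
  rw [bern_cyl hp hq h, W_preN h0 he ho]

lemma bern_le {p q : ℝ} (hp : 0 < p) (hq : 0 < q) (h : p + q = 1) (N n : ℕ) :
    bern p q {d | preN d N = n} ≤ ENNReal.ofReal (max p q ^ N) := by
  by_cases hn : n < 2 ^ N
  · obtain ⟨c, rfl⟩ := preN_surj N n hn
    rw [bern_cyl hp hq h]
    apply ENNReal.ofReal_le_ofReal
    calc _ ≤ ∏ k ∈ Finset.range N, max p q := by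
          apply Finset.prod_le_prod
          · intro k _; unfold dw; split_ifs <;> positivity
          · intro k _; unfold dw; split_ifs <;> simp
      _ = _ := by simp
  · have : {d | preN d N = n} = ∅ := by
      ext d
      simp only [Set.mem_ofPred_eq, Set.mem_empty_iff_false, iff_false]
      intro hd
      exact hn (hd ▸ preN_lt d N)
    simp [this]

lemma lo_mono (c : ℕ → Bool) : Monotone (fun N => (preN c N : ℝ) / 2 ^ N) := by
  apply monotone_nat_of_le_succ
  intro N
  rw [div_le_div_iff₀ (by positivity) (by positivity), pow_succ]
  have : (0:ℝ) ≤ ((c N).toNat : ℝ) := by positivity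
  have h2 : (0:ℝ) < 2 ^ N := by positivity
  simp only [preN]; push_cast
  nlinarith

lemma hi_anti (c : ℕ → Bool) : Antitone (fun N => ((preN c N : ℝ) + 1) / 2 ^ N) := by
  apply antitone_nat_of_succ_le
  intro N
  rw [div_le_div_iff₀ (by positivity) (by positivity), pow_succ]
  have : ((c N).toNat : ℝ) ≤ 1 := by exact_mod_cast Bool.toNat_le (c N)
  have h2 : (0:ℝ) < 2 ^ N := by positivity
  simp only [preN]; push_cast
  nlinarith

lemma lo_le_hi (c : ℕ → Bool) (M N : ℕ) :
    (preN c M : ℝ) / 2 ^ M ≤ ((preN c N : ℝ) + 1) / 2 ^ N := by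
  have h1 := lo_mono c (le_max_left M N)
  have h2 := hi_anti c (le_max_right M N)
  simp only at h1 h2
  refine h1.trans (le_trans ?_ h2)
  gcongr
  linarith

lemma lo_bdd (c : ℕ → Bool) : BddAbove (Set.range fun N => (preN c N : ℝ) / 2 ^ N) :=
  ⟨_, by rintro _ ⟨M, rfl⟩; exact lo_le_hi c M 0⟩

lemma binX_tendsto (c : ℕ → Bool) :
    Tendsto (fun N => (preN c N : ℝ) / 2 ^ N) atTop (𝓝 (binX c)) :=
  tendsto_atTop_ciSup (lo_mono c) (lo_bdd c)

lemma binX_mem (c : ℕ → Bool) (N : ℕ) :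
    binX c ∈ Set.Icc ((preN c N : ℝ) / 2 ^ N) (((preN c N : ℝ) + 1) / 2 ^ N) :=
  ⟨le_ciSup (lo_bdd c) N, ciSup_le fun M => lo_le_hi c M N⟩

lemma lo_meas (N : ℕ) : Measurable (fun c => (preN c N : ℝ) / 2 ^ N) :=
  ((measurable_of_countable (fun n : ℕ => (n : ℝ))).comp (preN_meas N)).div_const _

lemma binX_meas : Measurable binX :=
  measurable_of_tendsto_metrizable lo_meas (tendsto_pi_nhds.mpr binX_tendsto)

/-- Splitting a sum over `range (2^(N+1))`. -/
lemma sum_split (h : ℕ → ℝ) (m : ℕ) :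
    ∑ n ∈ Finset.range (2 * m), h n = ∑ n ∈ Finset.range m, (h (2*n) + h (2*n+1)) := by
  induction m with
  | zero => simp
  | succ m ih =>
    rw [Finset.sum_range_succ, ← ih, show 2 * (m+1) = 2*m+1+1 by ring, Finset.sum_range_succ,
      Finset.sum_range_succ]
    ring

lemma sum_W {p q : ℝ} {W : ℕ → ℕ → ℝ} (h0 : W 0 0 = 1)
    (he : ∀ N n, W (N+1) (2*n) = p * W N n) (ho : ∀ N n, W (N+1) (2*n+1) = q * W N n)
    (N : ℕ) : ∑ n ∈ Finset.range (2 ^ N), W N n = (p + q) ^ N := by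
  induction N with
  | zero => simpa using h0
  | succ N ih =>
    rw [pow_succ', sum_split]
    simp only [he, ho, ← add_mul]
    rw [← Finset.mul_sum, ih]; ring

lemma no_atom {p q : ℝ} (hp : 0 < p) (hq : 0 < q) (h : p + q = 1) (x : ℝ) :
    (bern p q).map binX {x} = 0 := by
  rw [Measure.map_apply binX_meas (measurableSet_singleton x)]
  have key : ∀ N : ℕ, bern p q (binX ⁻¹' {x}) ≤ 2 * ENNReal.ofReal (max p q ^ N) := by
    intro N
    have sub : binX ⁻¹' {x} ⊆ {d | preN d N = ⌊x * 2 ^ N⌋₊} ∪ {d | preN d N = ⌊x * 2 ^ N⌋₊ - 1} := by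
      intro d hd
      have hd' : binX d = x := hd
      have hm := binX_mem d N
      rw [hd'] at hm
      obtain ⟨h1, h2⟩ := hm
      rw [div_le_iff₀ (by positivity)] at h1
      rw [le_div_iff₀ (by positivity)] at h2
      have a1 : preN d N ≤ ⌊x * 2 ^ N⌋₊ := Nat.le_floor h1
      have a2 : ⌊x * 2 ^ N⌋₊ ≤ preN d N + 1 := by
        apply Nat.floor_le_of_le; push_cast; exact h2
      simp only [Set.mem_union, Set.mem_ofPred_eq]
      omega
    calc _ ≤ _ := measure_mono sub
      _ ≤ _ := measure_union_le _ _
      _ ≤ _ := add_le_add (bern_le hp hq h N _) (bern_le hp hq h N _)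
      _ = _ := by rw [two_mul]
  have lim : Tendsto (fun N : ℕ => 2 * ENNReal.ofReal (max p q ^ N)) atTop (𝓝 0) := by
    have : Tendsto (fun N : ℕ => max p q ^ N) atTop (𝓝 0) :=
      tendsto_pow_atTop_nhds_zero_of_lt_one (by positivity) (max_lt (by linarith) (by linarith))
    have := ENNReal.Tendsto.const_mul (ENNReal.tendsto_ofReal this) (a := 2) (by simp)
    simpa using this
  exact le_antisymm (ge_of_tendsto' lim key) (zero_le)

lemma int_approx {p q : ℝ} (hp : 0 < p) (hq : 0 < q) (h : p + q = 1)
    {W : ℕ → ℕ → ℝ} (h0 : W 0 0 = 1)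
    (he : ∀ N n, W (N+1) (2*n) = p * W N n) (ho : ∀ N n, W (N+1) (2*n+1) = q * W N n)
    (hW : ∀ N n, 0 ≤ W N n) (g : ℝ → ℝ) (N : ℕ) :
    ∫ c, g ((preN c N : ℝ) / 2 ^ N) ∂(bern p q)
      = ∑ n ∈ Finset.range (2 ^ N), W N n * g ((n : ℝ) / 2 ^ N) := by
  have := coin_prob hp hq h
  have : IsProbabilityMeasure (bern p q) := by unfold bern; infer_instance
  have e : ∀ c, g ((preN c N : ℝ) / 2 ^ N) = ∑ n ∈ Finset.range (2 ^ N),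
      Set.indicator {d | preN d N = n} (fun _ => g ((n : ℝ) / 2 ^ N)) c := by
    intro c
    rw [Finset.sum_eq_single (preN c N)]
    · simp
    · intro b _ hb
      simp [Set.indicator, hb.symm]
    · intro hc
      exact absurd (Finset.mem_range.mpr (preN_lt c N)) hc
  have ms : ∀ n, MeasurableSet {d | preN d N = n} := fun n =>
    preN_meas N (measurableSet_singleton n)
  simp_rw [e]
  rw [integral_finsetSum]
  · apply Finset.sum_congr rfl
    intro n hn
    rw [integral_indicator_const _ (ms n), Measure.real,
      bern_W hp hq h h0 he ho N n (Finset.mem_range.mp hn), ENNReal.toReal_ofReal (hW N n),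
      smul_eq_mul]
  · intro n _
    exact (integrable_const _).indicator (ms n)

lemma tendsto_int {p q : ℝ} (hp : 0 < p) (hq : 0 < q) (h : p + q = 1)
    (g : BoundedContinuousFunction ℝ ℝ) :
    Tendsto (fun N => ∫ c, g ((preN c N : ℝ) / 2 ^ N) ∂(bern p q)) atTop
      (𝓝 (∫ x, g x ∂((bern p q).map binX))) := by
  have := coin_prob hp hq h
  have : IsProbabilityMeasure (bern p q) := by unfold bern; infer_instance
  rw [integral_map binX_meas.aemeasurable g.continuous.aestronglyMeasurable]
  apply tendsto_integral_of_dominated_convergence (fun _ => ‖g‖)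
  · intro N
    exact (g.continuous.measurable.comp (lo_meas N)).aestronglyMeasurable
  · exact integrable_const _
  · intro N
    exact Eventually.of_forall fun c => g.norm_coe_le_norm _
  · exact Eventually.of_forall fun c => (g.continuous.tendsto _).comp (binX_tendsto c)

lemma sing {p q : ℝ} (hp : 0 < p) (hq : 0 < q) (h : p + q = 1) (hne : p ≠ q)
    {W : ℕ → ℕ → ℝ} (h0 : W 0 0 = 1)
    (he : ∀ N n, W (N+1) (2*n) = p * W N n) (ho : ∀ N n, W (N+1) (2*n+1) = q * W N n)
    (hW : ∀ N n, 0 ≤ W N n) :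
    ((bern p q).map binX).MutuallySingular (volume.restrict (Set.Ico (0:ℝ) 1)) := by
  classical
  set r : ℝ := (√p + √q) * √(1/2) with hr
  have r0 : 0 ≤ r := by positivity
  have r1 : r < 1 := by
    have sp := Real.sq_sqrt hp.le
    have sq' := Real.sq_sqrt hq.le
    have sh := Real.sq_sqrt (show (0:ℝ) ≤ 1/2 by norm_num)
    have hs : √p ≠ √q := fun hh => hne (by rw [← sp, ← sq', hh])
    have : 0 < (√p - √q) ^ 2 := by
      have := sub_ne_zero.mpr hs
      positivity
    have : r ^ 2 < 1 := by
      rw [hr, mul_pow, sh]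
      nlinarith
    nlinarith
  have hel : ∀ N, ∑ n ∈ Finset.range (2 ^ N), √(W N n) * √(1/2) ^ N = r ^ N := by
    intro N
    have := sum_W (p := √p) (q := √q) (W := fun N n => √(W N n)) (by simp [h0])
      (by intro N n; simp only [he]; rw [Real.sqrt_mul hp.le])
      (by intro N n; simp only [ho]; rw [Real.sqrt_mul hq.le]) N
    rw [← Finset.sum_mul, this, hr, mul_pow]
  have hsq : ∀ N : ℕ, (√(1/2) ^ N) * (√(1/2) ^ N) = ((1:ℝ)/2)^N := by
    intro N
    rw [← mul_pow, Real.mul_self_sqrt (by norm_num)]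
  set S : ℕ → Finset ℕ := fun N => (Finset.range (2 ^ N)).filter (fun n => (1/2:ℝ)^N < W N n)
  set E : ℕ → Set ℝ := fun N => ⋃ n ∈ S N, Set.Icc ((n:ℝ) / 2 ^ N) (((n:ℝ)+1) / 2 ^ N) with hE
  have Em : ∀ N, MeasurableSet (E N) := fun N =>
    Finset.measurableSet_biUnion _ fun n _ => measurableSet_Icc
  have hsum : ∑' N : ℕ, ENNReal.ofReal (r ^ N) ≠ ⊤ :=
    (summable_geometric_of_lt_one r0 r1).tsum_ofReal_ne_top
  have hlam : ∀ N, volume (E N) ≤ ENNReal.ofReal (r ^ N) := by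
    intro N
    calc volume (E N) ≤ ∑ n ∈ S N, volume (Set.Icc ((n:ℝ) / 2 ^ N) (((n:ℝ)+1) / 2 ^ N)) :=
          measure_biUnion_finset_le _ _
      _ = ∑ n ∈ S N, ENNReal.ofReal ((1/2:ℝ)^N) := by
          apply Finset.sum_congr rfl
          intro n _
          rw [Real.volume_Icc]
          congr 1
          rw [← sub_div]; simp
      _ = ENNReal.ofReal (∑ n ∈ S N, (1/2:ℝ)^N) := by
          rw [ENNReal.ofReal_sum_of_nonneg]; intros; positivity
      _ ≤ _ := by
          apply ENNReal.ofReal_le_ofReal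
          rw [← hel N]
          calc _ ≤ ∑ n ∈ S N, √(W N n) * √(1/2) ^ N := by
                apply Finset.sum_le_sum
                intro n hn
                have hn' := (Finset.mem_filter.mp hn).2
                rw [← hsq N]
                apply mul_le_mul_of_nonneg_right _ (by positivity)
                apply Real.le_sqrt_of_sq_le
                rw [sq, hsq]; exact hn'.le
            _ ≤ _ := Finset.sum_le_sum_of_subset_of_nonneg (Finset.filter_subset _ _)
                  (by intros; positivity)
  have hmu : ∀ N, (bern p q).map binX (E N)ᶜ ≤ ENNReal.ofReal (r ^ N) := by
    intro N
    rw [Measure.map_apply binX_meas (Em N).compl]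
    set T := (Finset.range (2 ^ N)).filter (fun n => ¬ (1/2:ℝ)^N < W N n)
    have sub : binX ⁻¹' (E N)ᶜ ⊆ ⋃ n ∈ T, {d | preN d N = n} := by
      intro d hd
      simp only [Set.mem_iUnion, Set.mem_ofPred_eq]
      refine ⟨preN d N, ?_, rfl⟩
      refine Finset.mem_filter.mpr ⟨Finset.mem_range.mpr (preN_lt d N), fun hc => hd ?_⟩
      simp only [hE, Set.mem_iUnion]
      exact ⟨preN d N, Finset.mem_filter.mpr ⟨Finset.mem_range.mpr (preN_lt d N), hc⟩,
        binX_mem d N⟩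
    calc _ ≤ _ := measure_mono sub
      _ ≤ ∑ n ∈ T, bern p q {d | preN d N = n} := measure_biUnion_finset_le _ _
      _ = ∑ n ∈ T, ENNReal.ofReal (W N n) := by
          apply Finset.sum_congr rfl
          intro n hn
          exact bern_W hp hq h h0 he ho N n (Finset.mem_range.mp (Finset.mem_filter.mp hn).1)
      _ = ENNReal.ofReal (∑ n ∈ T, W N n) := by
          rw [ENNReal.ofReal_sum_of_nonneg]; intros; exact hW _ _
      _ ≤ _ := by
          apply ENNReal.ofReal_le_ofReal
          rw [← hel N]
          calc _ ≤ ∑ n ∈ T, √(W N n) * √(1/2) ^ N := by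
                apply Finset.sum_le_sum
                intro n hn
                have hn' := not_lt.mp (Finset.mem_filter.mp hn).2
                conv_lhs => rw [← Real.mul_self_sqrt (hW N n)]
                apply mul_le_mul_of_nonneg_left _ (by positivity)
                apply Real.sqrt_le_iff.mpr
                refine ⟨by positivity, ?_⟩
                rw [sq, hsq]; exact hn'
            _ ≤ _ := Finset.sum_le_sum_of_subset_of_nonneg (Finset.filter_subset _ _)
                  (by intros; positivity)
  have z1 : volume (limsup E atTop) = 0 :=
    measure_limsup_atTop_eq_zero (ne_top_of_le_ne_top hsum (ENNReal.tsum_le_tsum hlam))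
  have z2 : (bern p q).map binX (limsup (fun N => (E N)ᶜ) atTop) = 0 :=
    measure_limsup_atTop_eq_zero (ne_top_of_le_ne_top hsum (ENNReal.tsum_le_tsum hmu))
  refine Measure.MutuallySingular.mk (s := limsup (fun N => (E N)ᶜ) atTop) (t := limsup E atTop)
    z2 ?_ ?_
  · exact le_antisymm ((Measure.restrict_apply_le _ _).trans z1.le) zero_le
  · intro x _
    by_cases hx : x ∈ limsup E atTop
    · exact Or.inr hx
    · left
      rw [mem_limsup_iff_frequently_mem] at hx ⊢
      exact (not_frequently.mp hx).frequently

theorem stmt_3 (A₀ A₁ b₀ b₁ : ℕ) (hnz : ¬(A₀ = 0 ∧ A₁ = 0 ∧ b₀ = 0 ∧ b₁ = 0))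
    (f : ℕ → ℕ) (hf1 : 1 ≤ f 1)
    (heven : ∀ n, 1 ≤ n → f (2 * n) = A₀ * f n + b₀)
    (hodd : ∀ n, 1 ≤ n → f (2 * n + 1) = A₁ * f n + b₁)
    (hb₀ : b₀ = 0) (hb₁ : b₁ = 0) (hAne : A₀ ≠ A₁) (hA0 : 1 ≤ A₀) (hA1 : 1 ≤ A₁) :
    ∃ μ : Measure ℝ, IsProbabilityMeasure μ ∧ WeakLimit (ghostApprox f) μ ∧
      μ.MutuallySingular (volume.restrict (Set.Ico (0:ℝ) 1)) ∧
      ∀ x : ℝ, μ {x} = 0 := by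
  subst hb₀ hb₁
  have a0 : (0:ℝ) < A₀ := by exact_mod_cast hA0
  have a1 : (0:ℝ) < A₁ := by exact_mod_cast hA1
  have f1 : (0:ℝ) < f 1 := by exact_mod_cast hf1
  set p : ℝ := A₀ / (A₀ + A₁) with hpd
  set q : ℝ := A₁ / (A₀ + A₁) with hqd
  have hp : 0 < p := by positivity
  have hq : 0 < q := by positivity
  have h : p + q = 1 := by rw [hpd, hqd]; field_simp
  have hne : p ≠ q := by
    rw [hpd, hqd]
    intro hh
    rw [div_left_inj' (by positivity)] at hh
    exact hAne (by exact_mod_cast hh)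
  set W : ℕ → ℕ → ℝ := fun N n => (f (2 ^ N + n) : ℝ) / (f 1 * (A₀ + A₁) ^ N) with hWd
  have h0 : W 0 0 = 1 := by simp [hWd, f1.ne']
  have he : ∀ N n, W (N+1) (2*n) = p * W N n := by
    intro N n
    have : 2 ^ (N+1) + 2 * n = 2 * (2 ^ N + n) := by ring
    simp only [hWd, hpd]
    rw [this, heven _ (by have := Nat.one_le_two_pow (n := N); omega)]
    push_cast
    field_simp
    ring
  have ho : ∀ N n, W (N+1) (2*n+1) = q * W N n := by
    intro N n
    have : 2 ^ (N+1) + (2 * n + 1) = 2 * (2 ^ N + n) + 1 := by ring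
    simp only [hWd, hqd]
    rw [this, hodd _ (by have := Nat.one_le_two_pow (n := N); omega)]
    push_cast
    field_simp
    ring
  have hW : ∀ N n, 0 ≤ W N n := fun N n => by positivity
  have hsum : ∀ N, ∑ n ∈ Finset.range (2 ^ N), (f (2 ^ N + n) : ℝ) = f 1 * (A₀ + A₁) ^ N := by
    intro N
    have := sum_W h0 he ho N
    rw [h, one_pow, ← Finset.sum_div, div_eq_one_iff_eq (by positivity)] at this
    exact this
  have := coin_prob hp hq h
  have : IsProbabilityMeasure (bern p q) := by unfold bern; infer_instance
  refine ⟨(bern p q).map binX, Measure.isProbabilityMeasure_map binX_meas.aemeasurable, ?_,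
    sing hp hq h hne h0 he ho hW, no_atom hp hq h⟩
  intro g
  convert tendsto_int hp hq h g using 2 with N
  rw [int_approx hp hq h h0 he ho hW, ghostApprox, integral_smul_measure,
    integral_finsetSum_measure]
  · simp only [integral_smul_measure, integral_dirac, ENNReal.toReal_natCast, smul_eq_mul,
      ENNReal.toReal_inv]
    rw [ENNReal.toReal_sum (by intros; simp)]
    simp only [ENNReal.toReal_natCast]
    rw [hsum, Finset.mul_sum]
    apply Finset.sum_congr rfl
    intro n _
    simp only [hWd]
    field_simp
  · intro n _
    exact (integrable_dirac (by simp)).smul_measure (by simp)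
end

section
/- Assume 1 ≤ A₀ < A₁, A₀ + A₁ ≥ 3, and let μ be the ghost measure of f. Set Λ = log(2A₁/(A₀+A₁)) / log(A₁/A₀). If x ∈ [0,1) is such that the lower density of zeroes in its binary expansion, liminf_{i→∞} (#{1 ≤ j ≤ i : d_j(x) = 0})/i, is strictly greater than Λ, then lim_{i→∞} 2^i · μ(E_i(x)) = 0, where E_i(x) = [⌊2^i x⌋/2^i, (⌊2^i x⌋+1)/2^i) is the level-i dyadic interval containing x. -/
open MeasureTheory Filter Topology

/-- Block sums of `f` over the descendants of `m` at depth `k`. -/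
def blockSum (f : ℕ → ℕ) (m k : ℕ) : ℕ := ∑ r ∈ Finset.range (2 ^ k), f (2 ^ k * m + r)

lemma sum_range_two_mul (g : ℕ → ℕ) (n : ℕ) :
    ∑ r ∈ Finset.range (2 * n), g r = ∑ r ∈ Finset.range n, (g (2 * r) + g (2 * r + 1)) := by
  induction n with
  | zero => simp
  | succ n ih => rw [show 2 * (n + 1) = 2 * n + 1 + 1 by ring, Finset.sum_range_succ,
      Finset.sum_range_succ, ih, Finset.sum_range_succ]; ring

lemma blockSum_succ {A₀ A₁ b₀ b₁ : ℕ} {f : ℕ → ℕ}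
    (heven : ∀ n, 1 ≤ n → f (2 * n) = A₀ * f n + b₀)
    (hodd : ∀ n, 1 ≤ n → f (2 * n + 1) = A₁ * f n + b₁) (m k : ℕ) (hm : 1 ≤ m) :
    blockSum f m (k + 1) = (A₀ + A₁) * blockSum f m k + 2 ^ k * (b₀ + b₁) := by
  unfold blockSum
  rw [show 2 ^ (k + 1) = 2 * 2 ^ k by ring, sum_range_two_mul, Finset.mul_sum]
  have : ∀ r ∈ Finset.range (2 ^ k), f (2 * 2 ^ k * m + 2 * r) + f (2 * 2 ^ k * m + (2 * r + 1))
      = (A₀ + A₁) * f (2 ^ k * m + r) + (b₀ + b₁) := by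
    intro r _
    have h1 : 1 ≤ 2 ^ k * m + r := by
      have : 0 < 2 ^ k * m := by positivity
      omega
    have e := heven _ h1
    have o := hodd _ h1
    rw [show 2 * 2 ^ k * m + 2 * r = 2 * (2 ^ k * m + r) by ring,
      show 2 * 2 ^ k * m + (2 * r + 1) = 2 * (2 ^ k * m + r) + 1 by ring, e, o]
    ring
  rw [Finset.sum_congr rfl this, Finset.sum_add_distrib]
  simp

lemma blockSum_le {A₀ A₁ b₀ b₁ : ℕ} {f : ℕ → ℕ}
    (heven : ∀ n, 1 ≤ n → f (2 * n) = A₀ * f n + b₀)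
    (hodd : ∀ n, 1 ≤ n → f (2 * n + 1) = A₁ * f n + b₁) (hA : 3 ≤ A₀ + A₁)
    (m k : ℕ) (hm : 1 ≤ m) :
    blockSum f m k + 2 ^ k * (b₀ + b₁) ≤ (A₀ + A₁) ^ k * (f m + (b₀ + b₁)) := by
  induction k with
  | zero => simp [blockSum]
  | succ k ih =>
    rw [blockSum_succ heven hodd m k hm]
    have h1 := Nat.mul_le_mul_left (A₀ + A₁) ih
    have h2 := Nat.mul_le_mul_right (2 ^ k * (b₀ + b₁)) hA
    rw [pow_succ, pow_succ]
    nlinarith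

lemma le_blockSum {A₀ A₁ b₀ b₁ : ℕ} {f : ℕ → ℕ}
    (heven : ∀ n, 1 ≤ n → f (2 * n) = A₀ * f n + b₀)
    (hodd : ∀ n, 1 ≤ n → f (2 * n + 1) = A₁ * f n + b₁)
    (m k : ℕ) (hm : 1 ≤ m) :
    (A₀ + A₁) ^ k * f m ≤ blockSum f m k := by
  induction k with
  | zero => simp [blockSum]
  | succ k ih =>
    rw [blockSum_succ heven hodd m k hm]
    have h1 := Nat.mul_le_mul_left (A₀ + A₁) ih
    rw [pow_succ, mul_comm ((A₀ + A₁) ^ k), mul_assoc]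
    exact h1.trans (Nat.le_add_right _ _)

lemma total_eq (f : ℕ → ℕ) (N : ℕ) :
    (∑ n ∈ Finset.range (2 ^ N), (f (2 ^ N + n) : ENNReal)) = (blockSum f 1 N : ENNReal) := by
  simp [blockSum]

lemma ghost_apply (f : ℕ → ℕ) (N : ℕ) (E : Set ℝ) [DecidablePred fun n : ℕ => (n : ℝ) / 2 ^ N ∈ E]
    (hE : MeasurableSet E) :
    ghostApprox f N E = (blockSum f 1 N : ENNReal)⁻¹ *
      ((∑ n ∈ (Finset.range (2 ^ N)).filter (fun n : ℕ => (n : ℝ) / 2 ^ N ∈ E), f (2 ^ N + n) : ℕ)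
        : ENNReal) := by
  unfold ghostApprox
  rw [total_eq, Measure.smul_apply, Measure.finsetSum_apply, smul_eq_mul, Finset.sum_filter]
  congr 1
  push_cast
  refine Finset.sum_congr rfl fun n _ => ?_
  rw [Pi.smul_apply, Measure.dirac_apply' _ hE]
  by_cases h : (n : ℝ) / 2 ^ N ∈ E <;> simp [h]

lemma ghost_Ico_le {A₀ A₁ b₀ b₁ : ℕ} {f : ℕ → ℕ} (hf1 : 1 ≤ f 1)
    (heven : ∀ n, 1 ≤ n → f (2 * n) = A₀ * f n + b₀)
    (hodd : ∀ n, 1 ≤ n → f (2 * n + 1) = A₁ * f n + b₁) (hA : 3 ≤ A₀ + A₁)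
    (i k m : ℕ) :
    ghostApprox f (i + k) (Set.Ico ((m : ℝ) / 2 ^ i) (((m : ℝ) + 1) / 2 ^ i)) ≤
      ENNReal.ofReal (((f (2 ^ i + m) : ℝ) + (b₀ + b₁)) / ((A₀ : ℝ) + A₁) ^ i) := by
  classical
  rw [ghost_apply _ _ _ measurableSet_Ico]
  set T := (∑ n ∈ (Finset.range (2 ^ (i + k))).filter (fun n : ℕ => (n : ℝ) / 2 ^ (i + k) ∈
    Set.Ico ((m : ℝ) / 2 ^ i) (((m : ℝ) + 1) / 2 ^ i)), f (2 ^ (i + k) + n)) with hT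
  have hT1 : T ≤ blockSum f (2 ^ i + m) k := by
    have hsub : (Finset.range (2 ^ (i + k))).filter (fun n : ℕ => (n : ℝ) / 2 ^ (i + k) ∈
        Set.Ico ((m : ℝ) / 2 ^ i) (((m : ℝ) + 1) / 2 ^ i)) ⊆
        Finset.Ico (2 ^ k * m) (2 ^ k * m + 2 ^ k) := by
      intro n hn
      rw [Finset.mem_filter, Set.mem_Ico] at hn
      obtain ⟨_, h1, h2⟩ := hn
      rw [div_le_div_iff₀ (by positivity) (by positivity), pow_add] at h1
      rw [div_lt_div_iff₀ (by positivity) (by positivity), pow_add] at h2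
      have hp : (0:ℝ) < 2 ^ i := by positivity
      have h1' : (2:ℝ) ^ k * m ≤ n := by
        refine le_of_mul_le_mul_right ?_ hp
        linarith
      have h2' : (n : ℝ) < 2 ^ k * m + 2 ^ k := by
        refine lt_of_mul_lt_mul_right ?_ hp.le
        linarith
      rw [Finset.mem_Ico]
      exact ⟨by exact_mod_cast h1', by exact_mod_cast h2'⟩
    refine (Finset.sum_le_sum_of_subset hsub).trans ?_
    rw [Finset.sum_Ico_eq_sum_range]
    unfold blockSum
    rw [Nat.add_sub_cancel_left]
    refine Finset.sum_le_sum fun r _ => ?_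
    rw [pow_add, mul_add, ← add_assoc, mul_comm (2 ^ k) (2 ^ i)]
  have hm : 1 ≤ 2 ^ i + m := by
    have : 0 < 2 ^ i := by positivity
    omega
  have hb := blockSum_le heven hodd hA (2 ^ i + m) k hm
  have hl := le_blockSum heven hodd 1 (i + k) le_rfl
  have hTn : T ≤ (A₀ + A₁) ^ k * (f (2 ^ i + m) + (b₀ + b₁)) := by
    refine hT1.trans ((Nat.le_add_right _ _).trans hb)
  have hs : (A₀ + A₁) ^ (i + k) ≤ blockSum f 1 (i + k) :=
    (Nat.le_mul_of_pos_right _ hf1).trans hl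
  have hpos : 0 < blockSum f 1 (i + k) := lt_of_lt_of_le (by positivity) hs
  have hS : (0:ℝ) < (A₀ : ℝ) + A₁ := by
    have : (3:ℝ) ≤ (A₀ : ℝ) + A₁ := by exact_mod_cast hA
    linarith
  rw [mul_comm, ← div_eq_mul_inv]
  refine ENNReal.div_le_of_le_mul ?_
  rw [← ENNReal.ofReal_natCast T, ← ENNReal.ofReal_natCast (blockSum f 1 (i + k)),
    ← ENNReal.ofReal_mul (by positivity)]
  refine ENNReal.ofReal_le_ofReal ?_
  have hT' : (T : ℝ) ≤ ((A₀ : ℝ) + A₁) ^ k * (f (2 ^ i + m) + (b₀ + b₁)) := by exact_mod_cast hTn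
  have hs' : ((A₀ : ℝ) + A₁) ^ (i + k) ≤ blockSum f 1 (i + k) := by exact_mod_cast hs
  calc (T : ℝ) ≤ _ := hT'
    _ = ((f (2 ^ i + m) : ℝ) + (b₀ + b₁)) / ((A₀ : ℝ) + A₁) ^ i * ((A₀ : ℝ) + A₁) ^ (i + k) := by
      rw [pow_add]; field_simp
    _ ≤ _ := mul_le_mul_of_nonneg_left hs' (by positivity)

lemma f_level_le {A₀ A₁ b₀ b₁ : ℕ} {f : ℕ → ℕ}
    (heven : ∀ n, 1 ≤ n → f (2 * n) = A₀ * f n + b₀)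
    (hodd : ∀ n, 1 ≤ n → f (2 * n + 1) = A₁ * f n + b₁) (hlt : A₀ < A₁) (h2 : 2 ≤ A₁)
    (j m : ℕ) (hm : m < 2 ^ j) :
    f (2 ^ j + m) + (b₀ + b₁) ≤ A₁ ^ j * (f 1 + (b₀ + b₁)) := by
  induction j generalizing m with
  | zero =>
    have : m = 0 := by simpa using hm
    simp [this]
  | succ j ih =>
    have hm' : m / 2 < 2 ^ j := by rw [pow_succ] at hm; omega
    have := ih _ hm'
    have hp : 1 ≤ 2 ^ j + m / 2 := by
      have : 0 < 2 ^ j := by positivity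
      omega
    have key : f (2 ^ (j + 1) + m) ≤ A₁ * f (2 ^ j + m / 2) + (b₀ + b₁) := by
      rcases Nat.even_or_odd' m with ⟨t, rfl | rfl⟩
      · rw [show 2 * t / 2 = t by omega] at *
        rw [show 2 ^ (j + 1) + 2 * t = 2 * (2 ^ j + t) by ring, heven _ hp]
        have := Nat.mul_le_mul_right (f (2 ^ j + t)) hlt.le
        omega
      · rw [show (2 * t + 1) / 2 = t by omega] at *
        rw [show 2 ^ (j + 1) + (2 * t + 1) = 2 * (2 ^ j + t) + 1 by ring, hodd _ hp]
        omega
    have h3 := Nat.mul_le_mul_left A₁ this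
    have h4 := Nat.mul_le_mul_right (b₀ + b₁) h2
    rw [pow_succ A₁ j, mul_comm (A₁ ^ j), mul_assoc]
    rw [mul_add] at h3
    omega

/-- Crude uniform bound over all integer-indexed dyadic intervals. -/
lemma ghost_Ico_le_crude {A₀ A₁ b₀ b₁ : ℕ} {f : ℕ → ℕ} (hf1 : 1 ≤ f 1)
    (heven : ∀ n, 1 ≤ n → f (2 * n) = A₀ * f n + b₀)
    (hodd : ∀ n, 1 ≤ n → f (2 * n + 1) = A₁ * f n + b₁) (hlt : A₀ < A₁) (h2 : 2 ≤ A₁)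
    (hA : 3 ≤ A₀ + A₁) (j k : ℕ) (m : ℤ) (hm : m < 2 ^ j) :
    ghostApprox f (j + k) (Set.Ico ((m : ℝ) / 2 ^ j) (((m : ℝ) + 1) / 2 ^ j)) ≤
      ENNReal.ofReal (((f 1 : ℝ) + (b₀ + b₁)) * ((A₁ : ℝ) / ((A₀ : ℝ) + A₁)) ^ j) := by
  classical
  rcases lt_or_ge m 0 with h | h
  · rw [ghost_apply _ _ _ measurableSet_Ico, Finset.filter_eq_empty_iff.2]
    · simp
    · intro n _ hn
      have h1 := hn.2
      have h2 : (m : ℝ) + 1 ≤ 0 := by exact_mod_cast h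
      have h3 : ((m : ℝ) + 1) / 2 ^ j ≤ 0 := div_nonpos_of_nonpos_of_nonneg h2 (by positivity)
      have h4 : (0:ℝ) ≤ (n : ℝ) / 2 ^ (j + k) := by positivity
      linarith
  · lift m to ℕ using h
    have hm' : m < 2 ^ j := by exact_mod_cast hm
    refine (ghost_Ico_le hf1 heven hodd hA j k m).trans (ENNReal.ofReal_le_ofReal ?_)
    have h := f_level_le heven hodd hlt h2 j m hm'
    have h' : (f (2 ^ j + m) : ℝ) + (b₀ + b₁) ≤ (A₁ : ℝ) ^ j * (f 1 + (b₀ + b₁)) := by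
      exact_mod_cast h
    rw [div_pow, mul_div_assoc', mul_comm ((f 1 : ℝ) + _)]
    gcongr

lemma ghost_prob {A₀ A₁ b₀ b₁ : ℕ} {f : ℕ → ℕ} (hf1 : 1 ≤ f 1)
    (heven : ∀ n, 1 ≤ n → f (2 * n) = A₀ * f n + b₀)
    (hodd : ∀ n, 1 ≤ n → f (2 * n + 1) = A₁ * f n + b₁) (hA : 3 ≤ A₀ + A₁) (N : ℕ) :
    IsProbabilityMeasure (ghostApprox f N) := by
  classical
  constructor
  rw [ghost_apply _ _ _ MeasurableSet.univ]
  have hl := le_blockSum heven hodd 1 N le_rfl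
  have hpos : 0 < blockSum f 1 N := lt_of_lt_of_le (by positivity) hl
  have : (∑ n ∈ (Finset.range (2 ^ N)).filter (fun n : ℕ => (n : ℝ) / 2 ^ N ∈ Set.univ),
      f (2 ^ N + n)) = blockSum f 1 N := by simp [blockSum]
  rw [this]
  exact ENNReal.inv_mul_cancel (by exact_mod_cast hpos.ne') (by simp)

/-- Portmanteau for open sets. -/
lemma weak_open_le {μs : ℕ → Measure ℝ} {μ : Measure ℝ} (hμs : ∀ N, IsProbabilityMeasure (μs N))
    (hμ : IsProbabilityMeasure μ) (hlim : WeakLimit μs μ) {U : Set ℝ} (hU : IsOpen U)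
    {c : ENNReal} (hc : ∀ᶠ N in atTop, μs N U ≤ c) : μ U ≤ c := by
  let Q : ℕ → ProbabilityMeasure ℝ := fun N => ⟨μs N, hμs N⟩
  let Q' : ProbabilityMeasure ℝ := ⟨μ, hμ⟩
  have ht : Tendsto Q atTop (𝓝 Q') := by
    rw [ProbabilityMeasure.tendsto_iff_forall_integral_tendsto]
    exact hlim
  have h := ProbabilityMeasure.le_liminf_measure_open_of_tendsto ht hU
  refine (h : μ U ≤ _).trans ?_
  exact (liminf_le_liminf hc).trans (by simp)

lemma mu_Ico_le {A₀ A₁ b₀ b₁ : ℕ} {f : ℕ → ℕ} (hf1 : 1 ≤ f 1)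
    (heven : ∀ n, 1 ≤ n → f (2 * n) = A₀ * f n + b₀)
    (hodd : ∀ n, 1 ≤ n → f (2 * n + 1) = A₁ * f n + b₁) (hA0 : 1 ≤ A₀) (hlt : A₀ < A₁)
    (hA : 3 ≤ A₀ + A₁) {μ : Measure ℝ} (hμ : IsProbabilityMeasure μ)
    (hlim : WeakLimit (ghostApprox f) μ) (i m : ℕ) (hm : m < 2 ^ i) :
    (μ (Set.Ico ((m : ℝ) / 2 ^ i) (((m : ℝ) + 1) / 2 ^ i))).toReal ≤
      ((f (2 ^ i + m) : ℝ) + (b₀ + b₁)) / ((A₀ : ℝ) + A₁) ^ i := by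
  have hA0' : (1:ℝ) ≤ A₀ := by exact_mod_cast hA0
  have hA1' : (1:ℝ) ≤ A₁ := by exact_mod_cast hA0.trans hlt.le
  have main : ∀ k : ℕ, (μ (Set.Ico ((m : ℝ) / 2 ^ i) (((m : ℝ) + 1) / 2 ^ i))).toReal ≤
      ((f (2 ^ i + m) : ℝ) + (b₀ + b₁)) / ((A₀ : ℝ) + A₁) ^ i +
      ((f 1 : ℝ) + (b₀ + b₁)) * ((A₁ : ℝ) / ((A₀ : ℝ) + A₁)) ^ (i + k) := by
    intro k
    set U : Set ℝ := Set.Ioo (((2 ^ k * m - 1 : ℤ) : ℝ) / 2 ^ (i + k)) (((m : ℝ) + 1) / 2 ^ i) with hU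
    have hk : (m : ℝ) / 2 ^ i = (2 ^ k * m) / 2 ^ (i + k) := by
      rw [pow_add]; field_simp
    have hsub : Set.Ico ((m : ℝ) / 2 ^ i) (((m : ℝ) + 1) / 2 ^ i) ⊆ U := by
      intro y hy
      refine ⟨lt_of_lt_of_le ?_ hy.1, hy.2⟩
      rw [hk]
      push_cast
      gcongr
      linarith
    have hsub2 : U ⊆ Set.Ico ((m : ℝ) / 2 ^ i) (((m : ℝ) + 1) / 2 ^ i) ∪
        Set.Ico (((2 ^ k * m - 1 : ℤ) : ℝ) / 2 ^ (i + k))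
          ((((2 ^ k * m - 1 : ℤ) : ℝ) + 1) / 2 ^ (i + k)) := by
      intro y hy
      rcases le_or_gt ((m : ℝ) / 2 ^ i) y with h | h
      · exact Or.inl ⟨h, hy.2⟩
      · refine Or.inr ⟨hy.1.le, ?_⟩
        rw [hk] at h
        push_cast
        simpa using h
    have hle : μ U ≤ ENNReal.ofReal (((f (2 ^ i + m) : ℝ) + (b₀ + b₁)) / ((A₀ : ℝ) + A₁) ^ i) +
        ENNReal.ofReal (((f 1 : ℝ) + (b₀ + b₁)) * ((A₁ : ℝ) / ((A₀ : ℝ) + A₁)) ^ (i + k)) := by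
      refine weak_open_le (ghost_prob hf1 heven hodd hA) hμ hlim isOpen_Ioo ?_
      filter_upwards [eventually_ge_atTop (i + k)] with N hN
      obtain ⟨l, rfl⟩ := Nat.exists_eq_add_of_le hN
      refine (measure_mono hsub2).trans ((measure_union_le _ _).trans (add_le_add ?_ ?_))
      · rw [add_assoc]
        exact ghost_Ico_le hf1 heven hodd hA i (k + l) m
      · refine ghost_Ico_le_crude hf1 heven hodd hlt (by omega) hA (i + k) l _ ?_
        have : (m : ℤ) < 2 ^ i := by exact_mod_cast hm
        have : (2:ℤ) ^ k * m < 2 ^ k * 2 ^ i := by gcongr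
        rw [pow_add]
        linarith
    rw [← ENNReal.ofReal_add (by positivity) (by positivity)] at hle
    exact ENNReal.toReal_le_of_le_ofReal (by positivity) ((measure_mono hsub).trans hle)
  have ht : Tendsto (fun k : ℕ => ((f (2 ^ i + m) : ℝ) + (b₀ + b₁)) / ((A₀ : ℝ) + A₁) ^ i +
      ((f 1 : ℝ) + (b₀ + b₁)) * ((A₁ : ℝ) / ((A₀ : ℝ) + A₁)) ^ (i + k)) atTop
      (𝓝 (((f (2 ^ i + m) : ℝ) + (b₀ + b₁)) / ((A₀ : ℝ) + A₁) ^ i +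
        ((f 1 : ℝ) + (b₀ + b₁)) * 0)) := by
    refine Tendsto.const_add _ (Tendsto.const_mul _ ?_)
    have hq : Tendsto (fun n : ℕ => ((A₁ : ℝ) / ((A₀ : ℝ) + A₁)) ^ n) atTop (𝓝 0) := by
      refine tendsto_pow_atTop_nhds_zero_of_lt_one (by positivity) ?_
      rw [div_lt_one (by positivity)]
      linarith
    exact hq.comp (tendsto_atTop_mono (fun k => Nat.le_add_left k i) tendsto_id)
  simpa using ge_of_tendsto' ht main

lemma floor_step (x : ℝ) (i : ℕ) :
    ⌊(2:ℝ) ^ (i + 1) * x⌋ / 2 = ⌊(2:ℝ) ^ i * x⌋ := by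
  have h := Int.floor_div_natCast ((2:ℝ) ^ (i + 1) * x) 2
  rw [show (2:ℝ) ^ (i + 1) * x / ((2:ℕ) : ℝ) = 2 ^ i * x by push_cast; ring] at h
  simpa using h.symm

/-- number of zero digits -/
noncomputable def zc (x : ℝ) (i : ℕ) : ℕ :=
  ((Finset.Icc 1 i).filter fun j => ⌊(2:ℝ) ^ j * x⌋ % 2 = 0).card

lemma zc_succ (x : ℝ) (i : ℕ) :
    zc x (i + 1) = zc x i + if ⌊(2:ℝ) ^ (i + 1) * x⌋ % 2 = 0 then 1 else 0 := by
  unfold zc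
  rw [← Finset.insert_Icc_right_eq_Icc_add_one (by omega), Finset.filter_insert]
  split_ifs with h
  · rw [Finset.card_insert_of_notMem (by simp)]
  · simp

lemma zc_le (x : ℝ) (i : ℕ) : zc x i ≤ i := by
  refine (Finset.card_filter_le _ _).trans (by simp)

lemma f_path_le {A₀ A₁ b₀ b₁ : ℕ} {f : ℕ → ℕ}
    (heven : ∀ n, 1 ≤ n → f (2 * n) = A₀ * f n + b₀)
    (hodd : ∀ n, 1 ≤ n → f (2 * n + 1) = A₁ * f n + b₁) (hA0 : 1 ≤ A₀) (hA1 : 1 ≤ A₁)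
    (x : ℝ) (hx : x ∈ Set.Ico (0:ℝ) 1) (i : ℕ) :
    f (2 ^ i + ⌊(2:ℝ) ^ i * x⌋.toNat) ≤
      A₀ ^ zc x i * A₁ ^ (i - zc x i) * (f 1 + (b₀ + b₁) * i) := by
  induction i with
  | zero =>
    have : ⌊x⌋ = 0 := Int.floor_eq_zero_iff.2 hx
    simp [zc, this]
  | succ i ih =>
    have hs := floor_step x i
    have h0 : 0 ≤ ⌊(2:ℝ) ^ (i + 1) * x⌋ := Int.floor_nonneg.2 (mul_nonneg (by positivity) hx.1)
    have hz := zc_le x i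
    have hzs := zc_succ x i
    generalize ⌊(2:ℝ) ^ (i + 1) * x⌋ = a at *
    generalize ⌊(2:ℝ) ^ i * x⌋ = c at *
    have hp : 1 ≤ 2 ^ i + c.toNat := by
      have : 0 < 2 ^ i := by positivity
      omega
    have hP : 1 ≤ A₀ ^ zc x (i + 1) * A₁ ^ (i + 1 - zc x (i + 1)) := by
      have : 0 < A₀ ^ zc x (i + 1) * A₁ ^ (i + 1 - zc x (i + 1)) := by positivity
      omega
    have hPb := Nat.mul_le_mul_right (b₀ + b₁) hP
    by_cases hd : a % 2 = 0
    · rw [if_pos hd] at hzs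
      rw [show a.toNat = 2 * c.toNat by omega, show 2 ^ (i + 1) + 2 * c.toNat = 2 * (2 ^ i + c.toNat)
        by ring, heven _ hp]
      have e : A₀ ^ zc x (i + 1) * A₁ ^ (i + 1 - zc x (i + 1)) =
          A₀ * (A₀ ^ zc x i * A₁ ^ (i - zc x i)) := by
        rw [hzs, show i + 1 - (zc x i + 1) = i - zc x i by omega]; ring
      rw [e] at hPb ⊢
      have := Nat.mul_le_mul_left A₀ ih
      nlinarith
    · rw [if_neg hd, add_zero] at hzs
      rw [show a.toNat = 2 * c.toNat + 1 by omega,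
        show 2 ^ (i + 1) + (2 * c.toNat + 1) = 2 * (2 ^ i + c.toNat) + 1 by ring, hodd _ hp]
      have e : A₀ ^ zc x (i + 1) * A₁ ^ (i + 1 - zc x (i + 1)) =
          A₁ * (A₀ ^ zc x i * A₁ ^ (i - zc x i)) := by
        rw [hzs, show i + 1 - zc x i = (i - zc x i) + 1 by omega]; ring
      rw [e] at hPb ⊢
      have := Nat.mul_le_mul_left A₁ ih
      nlinarith

theorem stmt_11 (A₀ A₁ b₀ b₁ : ℕ) (hnz : ¬(A₀ = 0 ∧ A₁ = 0 ∧ b₀ = 0 ∧ b₁ = 0))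
    (f : ℕ → ℕ) (hf1 : 1 ≤ f 1)
    (heven : ∀ n, 1 ≤ n → f (2 * n) = A₀ * f n + b₀)
    (hodd : ∀ n, 1 ≤ n → f (2 * n + 1) = A₁ * f n + b₁)
    (hA0 : 1 ≤ A₀) (hlt : A₀ < A₁) (hA : 3 ≤ A₀ + A₁)
    (μ : Measure ℝ) (hμ : IsProbabilityMeasure μ)
    (hlim : WeakLimit (ghostApprox f) μ)
    (x : ℝ) (hx : x ∈ Set.Ico (0:ℝ) 1)
    (hdens : Real.log (2 * (A₁ : ℝ) / ((A₀ : ℝ) + A₁)) / Real.log ((A₁ : ℝ) / A₀) <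
      Filter.liminf (fun i : ℕ =>
        ((((Finset.Icc 1 i).filter fun j => ⌊(2:ℝ) ^ j * x⌋ % 2 = 0).card : ℝ) / i)) atTop) :
    Tendsto (fun i : ℕ => (2 : ℝ) ^ i *
        (μ (Set.Ico ((⌊(2:ℝ) ^ i * x⌋ : ℝ) / 2 ^ i) (((⌊(2:ℝ) ^ i * x⌋ : ℝ) + 1) / 2 ^ i))).toReal)
      atTop (𝓝 0) := by
  have hA0' : (1:ℝ) ≤ A₀ := by exact_mod_cast hA0
  have hlt' : (A₀ : ℝ) < A₁ := by exact_mod_cast hlt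
  have hA1' : (0:ℝ) < A₁ := by linarith
  obtain ⟨c, hc1, hc2⟩ := exists_between hdens
  have hL : 0 < Real.log ((A₁ : ℝ) / A₀) :=
    Real.log_pos ((one_lt_div (by linarith)).2 hlt')
  rw [div_lt_iff₀ hL] at hc1
  have hev : ∀ᶠ i : ℕ in atTop, c < (zc x i : ℝ) / i := by
    refine eventually_lt_of_lt_liminf hc2 ?_
    exact isBoundedUnder_of ⟨0, fun i => by positivity⟩
  set δ := c * Real.log ((A₁ : ℝ) / A₀) - Real.log (2 * (A₁ : ℝ) / ((A₀ : ℝ) + A₁)) with hδ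
  have hδ0 : 0 < δ := by linarith
  set q := Real.exp (-δ) with hq
  have hq1 : q < 1 := by rw [hq, Real.exp_lt_one_iff]; linarith
  have hq0 : 0 < q := Real.exp_pos _
  have hlimq : Tendsto (fun i : ℕ => ((f 1 : ℝ) + (b₀ + b₁)) * q ^ i +
      ((b₀ : ℝ) + b₁) * (i * q ^ i)) atTop (𝓝 0) := by
    have h1 := (tendsto_pow_atTop_nhds_zero_of_lt_one hq0.le hq1).const_mul ((f 1 : ℝ) + (b₀ + b₁))
    have h2 := (tendsto_self_mul_const_pow_of_lt_one hq0.le hq1).const_mul ((b₀ : ℝ) + b₁)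
    simpa using h1.add h2
  refine tendsto_of_tendsto_of_tendsto_of_le_of_le' tendsto_const_nhds hlimq
    (Eventually.of_forall fun i => by positivity) ?_
  filter_upwards [hev, eventually_gt_atTop 0] with i hi hi0
  have hi0' : (0:ℝ) < i := by exact_mod_cast hi0
  rw [lt_div_iff₀ hi0'] at hi
  have hn0 : 0 ≤ ⌊(2:ℝ) ^ i * x⌋ := Int.floor_nonneg.2 (mul_nonneg (by positivity) hx.1)
  have hpath := f_path_le heven hodd hA0 (hA0.trans hlt.le) x hx i
  have hfl : ⌊(2:ℝ) ^ i * x⌋ < 2 ^ i := by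
    rw [Int.floor_lt]
    push_cast
    have := hx.2
    have h2 : (0:ℝ) < 2 ^ i := by positivity
    nlinarith
  obtain ⟨m, hm⟩ := Int.eq_ofNat_of_zero_le hn0
  rw [hm] at hpath hfl ⊢
  simp only [Int.toNat_natCast] at hpath
  have hmu := mu_Ico_le hf1 heven hodd hA0 hlt hA hμ hlim i m (by exact_mod_cast hfl)
  have hz := zc_le x i
  have hPq : 2 ^ i * ((A₀ : ℝ) ^ zc x i * (A₁ : ℝ) ^ (i - zc x i)) / ((A₀ : ℝ) + A₁) ^ i ≤ q ^ i := by
    have hpos : 0 < 2 ^ i * ((A₀ : ℝ) ^ zc x i * (A₁ : ℝ) ^ (i - zc x i)) / ((A₀ : ℝ) + A₁) ^ i := by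
      positivity
    rw [← Real.log_le_log_iff hpos (by positivity), Real.log_pow, hq, Real.log_exp,
      Real.log_div (by positivity) (by positivity), Real.log_mul (by positivity) (by positivity),
      Real.log_mul (by positivity) (by positivity), Real.log_pow, Real.log_pow, Real.log_pow,
      Real.log_pow, hδ, Real.log_div (by positivity) (by positivity),
      Real.log_div (by positivity) (by positivity), Real.log_mul (by positivity) (by positivity),
      Nat.cast_sub hz]
    rw [Real.log_div (by positivity) (by positivity)] at hL
    nlinarith [mul_le_mul_of_nonneg_right hi.le hL.le]
  have hP1 : (1:ℝ) ≤ (A₀ : ℝ) ^ zc x i * (A₁ : ℝ) ^ (i - zc x i) :=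
    one_le_mul_of_one_le_of_one_le (one_le_pow₀ hA0') (one_le_pow₀ (by linarith))
  have hpath' : (f (2 ^ i + m) : ℝ) ≤ (A₀ : ℝ) ^ zc x i * (A₁ : ℝ) ^ (i - zc x i) *
      (f 1 + (b₀ + b₁) * i) := by exact_mod_cast hpath
  set P := (A₀ : ℝ) ^ zc x i * (A₁ : ℝ) ^ (i - zc x i) with hP
  have hfB : (f (2 ^ i + m) : ℝ) + (b₀ + b₁) ≤ P * ((f 1 : ℝ) + (b₀ + b₁) + (b₀ + b₁) * i) := by
    have : (0:ℝ) ≤ (b₀ : ℝ) + b₁ := by positivity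
    nlinarith
  calc _ ≤ (2:ℝ) ^ i * (((f (2 ^ i + m) : ℝ) + (b₀ + b₁)) / ((A₀ : ℝ) + A₁) ^ i) := by
        refine mul_le_mul_of_nonneg_left ?_ (by positivity)
        simpa only [Int.ofNat_eq_natCast, Int.cast_natCast] using hmu
    _ ≤ (2:ℝ) ^ i * ((P * ((f 1 : ℝ) + (b₀ + b₁) + (b₀ + b₁) * i)) / ((A₀ : ℝ) + A₁) ^ i) := by
        gcongr
    _ = (2 ^ i * P / ((A₀ : ℝ) + A₁) ^ i) * ((f 1 : ℝ) + (b₀ + b₁) + (b₀ + b₁) * i) := by ring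
    _ ≤ q ^ i * ((f 1 : ℝ) + (b₀ + b₁) + (b₀ + b₁) * i) := by gcongr
    _ = _ := by ring
end

section
/- If b₀ + b₁ ≥ 1, A₀ ≠ A₁ and A₀, A₁ ≥ 1, then the ghost measure μ of f is singular continuous: μ is mutually singular with Lebesgue measure λ on [0,1) and μ({x}) = 0 for every x ∈ ℝ. -/
open MeasureTheory Filter Topology

lemma gh_sum_double (h : ℕ → ℕ) (M : ℕ) :
    ∑ i ∈ Finset.range (2 * M), h i = ∑ i ∈ Finset.range M, (h (2 * i) + h (2 * i + 1)) := by
  induction M with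
  | zero => simp
  | succ M ih =>
    rw [Finset.sum_range_succ, ← ih, show 2 * (M + 1) = 2 * M + 1 + 1 by ring,
      Finset.sum_range_succ, Finset.sum_range_succ]
    ring

lemma gh_sum_double_real (h : ℕ → ℝ) (M : ℕ) :
    ∑ i ∈ Finset.range (2 * M), h i = ∑ i ∈ Finset.range M, (h (2 * i) + h (2 * i + 1)) := by
  induction M with
  | zero => simp
  | succ M ih =>
    rw [Finset.sum_range_succ, ← ih, show 2 * (M + 1) = 2 * M + 1 + 1 by ring,
      Finset.sum_range_succ, Finset.sum_range_succ]
    ring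

section aux
variable {A₀ A₁ b₀ b₁ : ℕ} {f : ℕ → ℕ}

lemma gh_rec (heven : ∀ n, 1 ≤ n → f (2 * n) = A₀ * f n + b₀)
    (hodd : ∀ n, 1 ≤ n → f (2 * n + 1) = A₁ * f n + b₁) (m : ℕ) (hm : 1 ≤ m) (k : ℕ) :
    ∑ i ∈ Finset.range (2 ^ (k + 1)), f (2 ^ (k + 1) * m + i) =
      (A₀ + A₁) * ∑ i ∈ Finset.range (2 ^ k), f (2 ^ k * m + i) + 2 ^ k * (b₀ + b₁) := by
  rw [pow_succ', gh_sum_double]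
  have : ∀ i ∈ Finset.range (2 ^ k),
      f (2 * 2 ^ k * m + 2 * i) + f (2 * 2 ^ k * m + (2 * i + 1)) =
      (A₀ + A₁) * f (2 ^ k * m + i) + (b₀ + b₁) := by
    intro i _
    have h1 : 1 ≤ 2 ^ k * m + i := by
      have : 1 ≤ 2 ^ k * m := Nat.mul_pos (by positivity) hm
      omega
    rw [show 2 * 2 ^ k * m + 2 * i = 2 * (2 ^ k * m + i) by ring,
      show 2 * 2 ^ k * m + (2 * i + 1) = 2 * (2 ^ k * m + i) + 1 by ring,
      heven _ h1, hodd _ h1]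
    ring
  rw [Finset.sum_congr rfl this, Finset.sum_add_distrib, ← Finset.mul_sum]
  simp

lemma gh_lower (heven : ∀ n, 1 ≤ n → f (2 * n) = A₀ * f n + b₀)
    (hodd : ∀ n, 1 ≤ n → f (2 * n + 1) = A₁ * f n + b₁) (m : ℕ) (hm : 1 ≤ m) (k : ℕ) :
    (A₀ + A₁) ^ k * f m ≤ ∑ i ∈ Finset.range (2 ^ k), f (2 ^ k * m + i) := by
  induction k with
  | zero => simp
  | succ k ih =>
    rw [gh_rec heven hodd m hm, pow_succ', mul_assoc]
    exact le_add_right (Nat.mul_le_mul_left _ ih)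

lemma gh_upper (heven : ∀ n, 1 ≤ n → f (2 * n) = A₀ * f n + b₀)
    (hodd : ∀ n, 1 ≤ n → f (2 * n + 1) = A₁ * f n + b₁) (hS : 3 ≤ A₀ + A₁)
    (m : ℕ) (hm : 1 ≤ m) (k : ℕ) :
    ∑ i ∈ Finset.range (2 ^ k), f (2 ^ k * m + i) + (b₀ + b₁) * 2 ^ k
      ≤ (A₀ + A₁) ^ k * (f m + (b₀ + b₁)) := by
  induction k with
  | zero => simp
  | succ k ih =>
    rw [gh_rec heven hodd m hm, pow_succ' (A₀ + A₁), mul_assoc (A₀ + A₁)]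
    refine le_trans ?_ (Nat.mul_le_mul_left _ ih)
    have : 3 * ((b₀ + b₁) * 2 ^ k) ≤ (A₀ + A₁) * ((b₀ + b₁) * 2 ^ k) :=
      Nat.mul_le_mul_right _ hS
    rw [mul_add, pow_succ]
    nlinarith

lemma gh_max (heven : ∀ n, 1 ≤ n → f (2 * n) = A₀ * f n + b₀)
    (hodd : ∀ n, 1 ≤ n → f (2 * n + 1) = A₁ * f n + b₁) (hS : 3 ≤ A₀ + A₁)
    (hA0 : 1 ≤ A₀) (hA1 : 1 ≤ A₁) (N : ℕ) :
    ∀ n < 2 ^ N, f (2 ^ N + n) + (b₀ + b₁) ≤ (A₀ + A₁ - 1) ^ N * (f 1 + (b₀ + b₁)) := by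
  obtain ⟨R, hR⟩ : ∃ R, A₀ + A₁ = R + 1 := ⟨A₀ + A₁ - 1, by omega⟩
  have e : A₀ + A₁ - 1 = R := by omega
  rw [e]
  induction N with
  | zero => intro n hn; simp at hn; simp [hn]
  | succ N ih =>
    intro n hn
    have hp : 1 ≤ 2 ^ N := Nat.one_le_two_pow
    have h1 := ih (n / 2) (by rw [pow_succ] at hn; omega)
    have key : f (2 ^ (N + 1) + n) + (b₀ + b₁) ≤ R * (f (2 ^ N + n / 2) + (b₀ + b₁)) := by
      have hR2 : 2 * (b₀ + b₁) ≤ R * (b₀ + b₁) := Nat.mul_le_mul_right _ (by omega)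
      rcases Nat.even_or_odd' n with ⟨j, rfl | rfl⟩
      · rw [show 2 ^ (N + 1) + 2 * j = 2 * (2 ^ N + j) by ring, heven _ (by omega),
          show 2 * j / 2 = j by omega]
        have := Nat.mul_le_mul_right (f (2 ^ N + j)) (show A₀ ≤ R by omega)
        rw [mul_add R]
        omega
      · rw [show 2 ^ (N + 1) + (2 * j + 1) = 2 * (2 ^ N + j) + 1 by ring, hodd _ (by omega),
          show (2 * j + 1) / 2 = j by omega]
        have := Nat.mul_le_mul_right (f (2 ^ N + j)) (show A₁ ≤ R by omega)
        rw [mul_add R]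
        omega
    calc _ ≤ _ := key
      _ ≤ _ := Nat.mul_le_mul_left _ h1
      _ = _ := by ring

lemma gh_sqrt_rec (heven : ∀ n, 1 ≤ n → f (2 * n) = A₀ * f n + b₀)
    (hodd : ∀ n, 1 ≤ n → f (2 * n + 1) = A₁ * f n + b₁) (N : ℕ) :
    ∑ n ∈ Finset.range (2 ^ (N + 1)), √((f (2 ^ (N + 1) + n) : ℝ) + (b₀ + b₁)) ≤
      (√A₀ + √A₁) * ∑ n ∈ Finset.range (2 ^ N), √((f (2 ^ N + n) : ℝ) + (b₀ + b₁))
        + 2 ^ N * (2 * √(2 * (b₀ + b₁))) := by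
  have aux : ∀ (A b x : ℝ), 0 ≤ A → 0 ≤ x → b ≤ (b₀ + b₁ : ℝ) → 
      √(A * x + b + (b₀ + b₁)) ≤ √A * √(x + (b₀ + b₁)) + √(2 * (b₀ + b₁)) := by
    intro A b x hA hx hb
    have h0 : (0:ℝ) ≤ b₀ + b₁ := by positivity
    rw [← Real.sqrt_mul hA]
    refine Real.sqrt_le_iff.2 ⟨by positivity, ?_⟩
    have h1 := Real.sq_sqrt (show 0 ≤ A * (x + (b₀ + b₁)) by positivity)
    have h2 := Real.sq_sqrt (show (0:ℝ) ≤ 2 * (b₀ + b₁) by positivity)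
    have h3 : 0 ≤ √(A * (x + (b₀ + b₁))) * √(2 * (b₀ + b₁)) := by positivity
    have h4 : 0 ≤ A * (b₀ + b₁) := by positivity
    nlinarith
  rw [pow_succ', gh_sum_double_real]
  have : ∀ i ∈ Finset.range (2 ^ N),
      √((f (2 * 2 ^ N + 2 * i) : ℝ) + (b₀ + b₁)) + √((f (2 * 2 ^ N + (2 * i + 1)) : ℝ) + (b₀ + b₁))
      ≤ (√A₀ + √A₁) * √((f (2 ^ N + i) : ℝ) + (b₀ + b₁)) + 2 * √(2 * (b₀ + b₁)) := by
    intro i _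
    have h1 : 1 ≤ 2 ^ N + i := by
      have : 1 ≤ 2 ^ N := Nat.one_le_two_pow
      omega
    rw [show 2 * 2 ^ N + 2 * i = 2 * (2 ^ N + i) by ring,
      show 2 * 2 ^ N + (2 * i + 1) = 2 * (2 ^ N + i) + 1 by ring,
      heven _ h1, hodd _ h1]
    push_cast
    have := aux A₀ b₀ (f (2 ^ N + i)) (by positivity) (by positivity) (by simp)
    have := aux A₁ b₁ (f (2 ^ N + i)) (by positivity) (by positivity) (by simp)
    linarith
  refine (Finset.sum_le_sum this).trans ?_
  rw [Finset.sum_add_distrib, ← Finset.mul_sum]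
  simp

lemma gh_sqrt_bound (heven : ∀ n, 1 ≤ n → f (2 * n) = A₀ * f n + b₀)
    (hodd : ∀ n, 1 ≤ n → f (2 * n + 1) = A₁ * f n + b₁)
    (hAne : A₀ ≠ A₁) (hA0 : 1 ≤ A₀) (hA1 : 1 ≤ A₁) :
    ∃ K r : ℝ, 0 ≤ K ∧ 0 ≤ r ∧ r < √(2 * (A₀ + A₁)) ∧ ∀ N : ℕ,
    ∑ n ∈ Finset.range (2 ^ N), √((f (2 ^ N + n) : ℝ) + (b₀ + b₁)) ≤ K * r ^ N := by
  set p := √(A₀:ℝ) + √(A₁:ℝ) with hp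
  set q := √(2 * (A₀ + A₁ : ℝ)) with hq
  have s0 : 1 ≤ √(A₀:ℝ) := Real.one_le_sqrt.2 (by exact_mod_cast hA0)
  have s1 : 1 ≤ √(A₁:ℝ) := Real.one_le_sqrt.2 (by exact_mod_cast hA1)
  have e0 : √(A₀:ℝ) ^ 2 = A₀ := Real.sq_sqrt (by positivity)
  have e1 : √(A₁:ℝ) ^ 2 = A₁ := Real.sq_sqrt (by positivity)
  have hne : √(A₀:ℝ) - √(A₁:ℝ) ≠ 0 := by
    intro h
    apply hAne
    have h' : √(A₀:ℝ) = √(A₁:ℝ) := by linarith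
    rw [h', e1] at e0
    exact_mod_cast e0.symm
  have hpq : p < q := by
    apply Real.lt_sqrt_of_sq_lt
    have := sq_pos_of_ne_zero hne
    nlinarith
  obtain ⟨r, hpr, hrq⟩ := exists_between hpq
  set C : ℝ := 2 * √(2 * (b₀ + b₁)) with hC
  have hC0 : 0 ≤ C := by positivity
  have hr2 : 2 ≤ r := by linarith
  set K : ℝ := √((f 1 : ℝ) + (b₀ + b₁)) + C / (r - p) with hK
  have hrp : 0 < r - p := by linarith
  have hK0 : 0 ≤ K := by positivity
  have hKC : C ≤ K * (r - p) := by
    rw [hK, add_mul, div_mul_cancel₀ _ hrp.ne']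
    have : 0 ≤ √((f 1 : ℝ) + (b₀ + b₁)) * (r - p) := by positivity
    linarith
  refine ⟨K, r, hK0, by linarith, hrq, fun N => ?_⟩
  induction N with
  | zero =>
    simp [hK]
    positivity
  | succ N ih =>
    refine (gh_sqrt_rec heven hodd N).trans ?_
    have h2 : (2:ℝ) ^ N ≤ r ^ N := by gcongr
    have hrN : 0 ≤ r ^ N := by positivity
    calc _ ≤ p * (K * r ^ N) + r ^ N * C := by gcongr
      _ ≤ p * (K * r ^ N) + r ^ N * (K * (r - p)) := by gcongr
      _ = _ := by ring

lemma gh_apply (L : ℕ) (T : Set ℝ) [DecidablePred fun n : ℕ => (n : ℝ) / 2 ^ L ∈ T]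
    (hT : MeasurableSet T) : ghostApprox f L T =
    ((∑ n ∈ Finset.range (2 ^ L), f (2 ^ L + n) : ℕ) : ENNReal)⁻¹ *
     ((∑ n ∈ (Finset.range (2 ^ L)).filter (fun n : ℕ => (n : ℝ) / 2 ^ L ∈ T), f (2 ^ L + n) : ℕ)
        : ENNReal) := by
  simp only [ghostApprox, Measure.smul_apply, Measure.finsetSum_apply, smul_eq_mul,
    Measure.dirac_apply' _ hT, Nat.cast_sum, Finset.sum_filter]
  congr 1
  refine Finset.sum_congr rfl fun n _ => ?_
  by_cases h : (n : ℝ) / 2 ^ L ∈ T <;> simp [h]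

lemma gh_total (heven : ∀ n, 1 ≤ n → f (2 * n) = A₀ * f n + b₀)
    (hodd : ∀ n, 1 ≤ n → f (2 * n + 1) = A₁ * f n + b₁) (hf1 : 1 ≤ f 1) (L : ℕ) :
    (A₀ + A₁) ^ L ≤ ∑ n ∈ Finset.range (2 ^ L), f (2 ^ L + n) := by
  have := gh_lower heven hodd 1 le_rfl L
  simp only [mul_one] at this
  exact (Nat.le_mul_of_pos_right _ hf1).trans this

lemma gh_prob (heven : ∀ n, 1 ≤ n → f (2 * n) = A₀ * f n + b₀)
    (hodd : ∀ n, 1 ≤ n → f (2 * n + 1) = A₁ * f n + b₁) (hf1 : 1 ≤ f 1) (hA0 : 1 ≤ A₀) (L : ℕ) :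
    IsProbabilityMeasure (ghostApprox f L) := by
  classical
  refine ⟨?_⟩
  rw [gh_apply L _ MeasurableSet.univ]
  simp only [Set.mem_univ, Finset.filter_true]
  refine ENNReal.inv_mul_cancel ?_ (ENNReal.natCast_ne_top _)
  have h1 := gh_total heven hodd hf1 L
  have : 0 < (A₀ + A₁) ^ L := by apply pow_pos; omega
  exact Nat.cast_ne_zero.2 (by omega)

lemma gh_out (L : ℕ) (T : Set ℝ) (hT : MeasurableSet T) (hd : Disjoint T (Set.Ico 0 1)) :
    ghostApprox f L T = 0 := by
  classical
  rw [gh_apply L T hT, Finset.filter_false_of_mem]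
  · simp
  · intro n hn h
    refine Set.disjoint_left.1 hd h ⟨by positivity, ?_⟩
    rw [div_lt_one (by positivity)]
    exact_mod_cast Finset.mem_range.1 hn

lemma gh_cell (heven : ∀ n, 1 ≤ n → f (2 * n) = A₀ * f n + b₀)
    (hodd : ∀ n, 1 ≤ n → f (2 * n + 1) = A₁ * f n + b₁) (hf1 : 1 ≤ f 1) (hS : 3 ≤ A₀ + A₁)
    (N k n : ℕ) :
    ghostApprox f (N + k) (Set.Ico ((n : ℝ) / 2 ^ N) (((n : ℝ) + 1) / 2 ^ N)) ≤
      ENNReal.ofReal (((f (2 ^ N + n) : ℝ) + (b₀ + b₁)) / (A₀ + A₁) ^ N) := by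
  classical
  rw [gh_apply _ _ measurableSet_Ico]
  set D := ∑ n ∈ Finset.range (2 ^ (N + k)), f (2 ^ (N + k) + n) with hD
  have hDl : (A₀ + A₁) ^ (N + k) ≤ D := gh_total heven hodd hf1 (N + k)
  have hp : 0 < A₀ + A₁ := by omega
  have hpos : 0 < (A₀ + A₁) ^ (N + k) := pow_pos hp _
  set a := ∑ n_1 ∈ (Finset.range (2 ^ (N + k))).filter (fun n_1 : ℕ => (n_1 : ℝ) / 2 ^ (N + k) ∈
    Set.Ico ((n : ℝ) / 2 ^ N) (((n : ℝ) + 1) / 2 ^ N)), f (2 ^ (N + k) + n_1) with ha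
  have hau : a ≤ (A₀ + A₁) ^ k * (f (2 ^ N + n) + (b₀ + b₁)) := by
    refine le_trans ?_ (le_trans (Nat.le_add_right _ _)
      (gh_upper heven hodd hS (2 ^ N + n) (by have := Nat.one_le_two_pow (n := N); omega) k))
    have : ∑ i ∈ Finset.range (2 ^ k), f (2 ^ k * (2 ^ N + n) + i) =
        ∑ j ∈ Finset.Ico (n * 2 ^ k) ((n + 1) * 2 ^ k), f (2 ^ (N + k) + j) := by
      rw [Finset.sum_Ico_eq_sum_range]
      rw [show (n + 1) * 2 ^ k - n * 2 ^ k = 2 ^ k by rw [add_mul]; omega]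
      refine Finset.sum_congr rfl fun i _ => ?_
      congr 1
      ring
    rw [this]
    refine Finset.sum_le_sum_of_subset ?_
    intro j hj
    rw [Finset.mem_filter] at hj
    obtain ⟨_, h1, h2⟩ := hj
    rw [pow_add, div_le_div_iff₀ (by positivity) (by positivity)] at h1
    rw [pow_add, div_lt_div_iff₀ (by positivity) (by positivity)] at h2
    have hN : (0:ℝ) < 2 ^ N := by positivity
    rw [Finset.mem_Ico]
    constructor
    · have : (n:ℝ) * 2 ^ k ≤ j := by
        refine le_of_mul_le_mul_right ?_ hN
        linarith
      exact_mod_cast this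
    · have : (j:ℝ) < (n + 1) * 2 ^ k := by
        refine lt_of_mul_lt_mul_right ?_ hN.le
        linarith
      exact_mod_cast this
  have hD0 : (0:ℝ) < D := by exact_mod_cast hpos.trans_le hDl
  rw [mul_comm, ← div_eq_mul_inv, ← ENNReal.ofReal_natCast, ← ENNReal.ofReal_natCast (n := D),
    ← ENNReal.ofReal_div_of_pos hD0]
  refine ENNReal.ofReal_le_ofReal ?_
  have hpR : (0:ℝ) < A₀ + A₁ := by exact_mod_cast hp
  have hDl' : ((A₀:ℝ) + A₁) ^ (N + k) ≤ D := by exact_mod_cast hDl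
  have hau' : (a:ℝ) ≤ ((A₀:ℝ) + A₁) ^ k * (f (2 ^ N + n) + (b₀ + b₁)) := by exact_mod_cast hau
  rw [div_le_div_iff₀ hD0 (by positivity)]
  calc (a:ℝ) * (A₀ + A₁) ^ N ≤ ((A₀:ℝ) + A₁) ^ k * (f (2 ^ N + n) + (b₀ + b₁)) * (A₀ + A₁) ^ N := by
        gcongr
    _ = (f (2 ^ N + n) + (b₀ + b₁)) * ((A₀:ℝ) + A₁) ^ (N + k) := by ring
    _ ≤ _ := by gcongr

lemma gh_open (heven : ∀ n, 1 ≤ n → f (2 * n) = A₀ * f n + b₀)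
    (hodd : ∀ n, 1 ≤ n → f (2 * n + 1) = A₁ * f n + b₁) (hf1 : 1 ≤ f 1) (hA0 : 1 ≤ A₀)
    (μ : Measure ℝ) (hμ : IsProbabilityMeasure μ)
    (hlim : WeakLimit (ghostApprox f) μ) (U : Set ℝ) (hU : IsOpen U) (c : ENNReal) (N : ℕ)
    (h : ∀ k, ghostApprox f (N + k) U ≤ c) : μ U ≤ c := by
  let P : ℕ → ProbabilityMeasure ℝ := fun L => ⟨ghostApprox f L, gh_prob heven hodd hf1 hA0 L⟩
  let Q : ProbabilityMeasure ℝ := ⟨μ, hμ⟩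
  have ht : Tendsto P atTop (𝓝 Q) :=
    ProbabilityMeasure.tendsto_iff_forall_integral_tendsto.2 hlim
  have h1 := ProbabilityMeasure.le_liminf_measure_open_of_tendsto ht hU
  refine h1.trans ?_
  refine Filter.liminf_le_of_frequently_le' (Eventually.frequently ?_)
  filter_upwards [eventually_ge_atTop N] with L hL
  obtain ⟨k, rfl⟩ := Nat.exists_eq_add_of_le hL
  exact h k

end aux

theorem stmt_12 (A₀ A₁ b₀ b₁ : ℕ) (hnz : ¬(A₀ = 0 ∧ A₁ = 0 ∧ b₀ = 0 ∧ b₁ = 0))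
    (f : ℕ → ℕ) (hf1 : 1 ≤ f 1)
    (heven : ∀ n, 1 ≤ n → f (2 * n) = A₀ * f n + b₀)
    (hodd : ∀ n, 1 ≤ n → f (2 * n + 1) = A₁ * f n + b₁)
    (hb : 1 ≤ b₀ + b₁) (hAne : A₀ ≠ A₁) (hA0 : 1 ≤ A₀) (hA1 : 1 ≤ A₁)
    (μ : Measure ℝ) (hμ : IsProbabilityMeasure μ)
    (hlim : WeakLimit (ghostApprox f) μ) :
    μ.MutuallySingular (volume.restrict (Set.Ico (0:ℝ) 1)) ∧
      ∀ x : ℝ, μ {x} = 0 := by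
  have hS : 3 ≤ A₀ + A₁ := by omega
  have hSR : (3:ℝ) ≤ A₀ + A₁ := by exact_mod_cast hS
  have hopen := gh_open heven hodd hf1 hA0 μ hμ hlim
  set I : ℕ → ℕ → Set ℝ := fun N n => Set.Ico ((n : ℝ) / 2 ^ N) (((n : ℝ) + 1) / 2 ^ N) with hI
  -- the set outside the unit interval is null
  have hout : ∀ U : Set ℝ, IsOpen U → Disjoint U (Set.Ico 0 1) → μ U = 0 := by
    intro U hU hd
    exact le_antisymm (hopen U hU 0 0 fun k => (gh_out _ U hU.measurableSet hd).le) zero_le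
  -- no atoms
  have hatom : ∀ x : ℝ, μ {x} = 0 := by
    intro x
    set ρ : ℝ := (A₀ + A₁ - 1) / (A₀ + A₁) with hρ
    set C : ℝ := f 1 + (b₀ + b₁) with hC
    have hC0 : 0 ≤ C := by positivity
    have hρ0 : 0 ≤ ρ := div_nonneg (by linarith) (by linarith)
    have hρ1 : ρ < 1 := by rw [hρ, div_lt_one (by linarith)]; linarith
    have hcell : ∀ N k n : ℕ, ghostApprox f (N + k) (I N n) ≤ ENNReal.ofReal (C * ρ ^ N) := by
      intro N k n
      by_cases hn : n < 2 ^ N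
      · refine (gh_cell heven hodd hf1 hS N k n).trans (ENNReal.ofReal_le_ofReal ?_)
        have h1 := gh_max heven hodd hS hA0 hA1 N n hn
        have h2 : ((f (2 ^ N + n) : ℝ) + (b₀ + b₁)) ≤ (A₀ + A₁ - 1) ^ N * C := by
          have h3 : ((A₀ + A₁ - 1 : ℕ) : ℝ) = A₀ + A₁ - 1 := by
            rw [Nat.cast_sub (by omega)]; push_cast; ring
          rw [← h3]
          rw [hC]; exact_mod_cast h1
        rw [hρ, div_pow, mul_div_assoc', mul_comm C]
        gcongr
      · rw [gh_out _ _ measurableSet_Ico]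
        · exact zero_le
        · rw [Set.disjoint_left]
          rintro y ⟨hy, _⟩ ⟨_, hy2⟩
          have : (1:ℝ) ≤ n / 2 ^ N := by
            rw [one_le_div (by positivity)]
            exact_mod_cast not_lt.1 hn
          linarith
    by_cases hx : x < 0
    · refine measure_mono_null (t := Set.Iio 0) (by simpa using hx) (hout _ isOpen_Iio ?_)
      rw [Set.disjoint_left]
      rintro y hy ⟨hy2, _⟩
      exact absurd hy (not_lt.2 hy2)
    push Not at hx
    have hbd : ∀ N : ℕ, μ {x} ≤ ENNReal.ofReal (2 * (C * ρ ^ N)) := by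
      intro N
      have h2N : (0:ℝ) < 2 ^ N := by positivity
      set n := ⌊x * 2 ^ N⌋₊ with hn
      have hn1 : (n:ℝ) ≤ x * 2 ^ N := Nat.floor_le (by positivity)
      have hn2 : x * 2 ^ N < n + 1 := Nat.lt_floor_add_one _
      set U := Set.Ioo (((n:ℝ) - 1) / 2 ^ N) (((n:ℝ) + 1) / 2 ^ N) with hU
      have hxU : x ∈ U := by
        constructor
        · rw [div_lt_iff₀ h2N]; linarith
        · rw [lt_div_iff₀ h2N]; linarith
      refine (measure_mono (Set.singleton_subset_iff.2 hxU)).trans ?_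
      refine hopen U isOpen_Ioo _ N fun k => ?_
      have hsub : U ⊆ Set.Iio 0 ∪ (I N (n - 1) ∪ I N n) := by
        intro y hy
        by_cases hy0 : y < 0
        · exact Or.inl hy0
        right
        by_cases hyn : y < n / 2 ^ N
        · left
          have hn0 : 1 ≤ n := by
            by_contra hcon
            have : n = 0 := by omega
            rw [this] at hyn
            simp at hyn
            exact hy0 hyn
          refine ⟨?_, ?_⟩
          · rw [Nat.cast_sub hn0]; simpa using hy.1.le
          · rw [Nat.cast_sub hn0]; simpa using hyn
        · right
          exact ⟨not_lt.1 hyn, hy.2⟩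
      refine (measure_mono hsub).trans ((measure_union_le _ _).trans ?_)
      rw [gh_out _ (Set.Iio 0) measurableSet_Iio, zero_add]
      · refine (measure_union_le _ _).trans ((add_le_add (hcell N k _) (hcell N k _)).trans ?_)
        rw [← ENNReal.ofReal_add (by positivity) (by positivity), two_mul]
      · rw [Set.disjoint_left]
        rintro y hy ⟨hy2, _⟩
        exact absurd hy (not_lt.2 hy2)
    have hlim0 : Tendsto (fun N : ℕ => ENNReal.ofReal (2 * (C * ρ ^ N))) atTop (𝓝 0) := by
      have h1 := tendsto_pow_atTop_nhds_zero_of_lt_one hρ0 hρ1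
      have h2 := ENNReal.tendsto_ofReal ((h1.const_mul C).const_mul 2)
      simpa using h2
    exact le_antisymm (ge_of_tendsto' hlim0 hbd) zero_le
  refine ⟨?_, hatom⟩
  -- cell bounds
  set u : ℕ → ℕ → ℝ := fun N n => ((f (2 ^ N + n) : ℝ) + (b₀ + b₁)) / (A₀ + A₁) ^ N with hu
  have hu0 : ∀ N n, 0 ≤ u N n := fun N n => by positivity
  have hμI : ∀ N n, μ (I N n) ≤ ENNReal.ofReal (u N n) := by
    intro N n
    have hsub : I N n ⊆ {(n : ℝ) / 2 ^ N} ∪ Set.Ioo ((n : ℝ) / 2 ^ N) (((n : ℝ) + 1) / 2 ^ N) := by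
      intro y hy
      rcases hy.1.eq_or_lt with h | h
      · left; exact h.symm
      · right; exact ⟨h, hy.2⟩
    refine (measure_mono hsub).trans ((measure_union_le _ _).trans ?_)
    rw [hatom, zero_add]
    exact hopen _ isOpen_Ioo _ N fun k =>
      (measure_mono Set.Ioo_subset_Ico_self).trans (gh_cell heven hodd hf1 hS N k n)
  have hvI : ∀ N n, volume (I N n) = ENNReal.ofReal ((1 / 2) ^ N) := by
    intro N n
    rw [hI, Real.volume_Ico]
    congr 1
    rw [one_div, inv_pow]
    ring
  obtain ⟨K, r, hK, hr, hrq, hE⟩ := gh_sqrt_bound heven hodd hAne hA0 hA1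
  set q := √(2 * (A₀ + A₁ : ℝ)) with hq
  have hq0 : 0 < q := by positivity
  set Q : ℕ → ℝ := fun N => ∑ n ∈ Finset.range (2 ^ N), √(u N n * (1 / 2) ^ N) with hQ
  have hQ0 : ∀ N, 0 ≤ Q N := fun N => Finset.sum_nonneg fun _ _ => Real.sqrt_nonneg _
  have hQb : ∀ N, Q N ≤ K * (r / q) ^ N := by
    intro N
    have : Q N = (∑ n ∈ Finset.range (2 ^ N), √((f (2 ^ N + n) : ℝ) + (b₀ + b₁))) / q ^ N := by
      rw [Finset.sum_div]
      refine Finset.sum_congr rfl fun n _ => ?_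
      have hqN : q ^ N = √((2 * (A₀ + A₁ : ℝ)) ^ N) := by
        rw [hq]
        symm
        rw [Real.sqrt_eq_iff_mul_self_eq (by positivity) (by positivity), ← mul_pow,
          Real.mul_self_sqrt (by positivity)]
      rw [hqN, ← Real.sqrt_div (by positivity)]
      congr 1
      rw [hu, mul_pow, one_div, inv_pow]
      field_simp
    rw [this, div_pow, mul_div_assoc']
    gcongr
    exact hE N
  have hsum : Summable Q := by
    refine Summable.of_nonneg_of_le hQ0 hQb (Summable.mul_left _ ?_)
    exact summable_geometric_of_lt_one (by positivity) (by rwa [div_lt_one hq0])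
  have hfin : ∑' N, ENNReal.ofReal (Q N) ≠ ⊤ := hsum.tsum_ofReal_ne_top
  -- good and bad sets
  classical
  set G : ℕ → Set ℝ := fun N =>
    ⋃ n ∈ (Finset.range (2 ^ N)).filter (fun n => (1 / 2 : ℝ) ^ N < u N n), I N n with hG
  set B : ℕ → Set ℝ := fun N =>
    ⋃ n ∈ (Finset.range (2 ^ N)).filter (fun n => ¬ (1 / 2 : ℝ) ^ N < u N n), I N n with hB
  have hGv : ∀ N, volume (G N) ≤ ENNReal.ofReal (Q N) := by
    intro N
    refine (measure_biUnion_finset_le _ _).trans ?_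
    rw [hQ, ENNReal.ofReal_sum_of_nonneg fun _ _ => Real.sqrt_nonneg _]
    refine le_trans (Finset.sum_le_sum (g := fun n => ENNReal.ofReal (√(u N n * (1 / 2) ^ N))) ?_)
      (Finset.sum_le_sum_of_subset (Finset.filter_subset _ _))
    intro n hn
    rw [hvI]
    refine ENNReal.ofReal_le_ofReal (Real.le_sqrt_of_sq_le ?_)
    have h := (Finset.mem_filter.1 hn).2
    rw [sq]
    gcongr
  have hBμ : ∀ N, μ (B N) ≤ ENNReal.ofReal (Q N) := by
    intro N
    refine (measure_biUnion_finset_le _ _).trans ?_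
    rw [hQ, ENNReal.ofReal_sum_of_nonneg fun _ _ => Real.sqrt_nonneg _]
    refine le_trans (Finset.sum_le_sum (g := fun n => ENNReal.ofReal (√(u N n * (1 / 2) ^ N))) ?_)
      (Finset.sum_le_sum_of_subset (Finset.filter_subset _ _))
    intro n hn
    refine (hμI N n).trans (ENNReal.ofReal_le_ofReal (Real.le_sqrt_of_sq_le ?_))
    have h := not_lt.1 (Finset.mem_filter.1 hn).2
    rw [sq]
    exact mul_le_mul_of_nonneg_left h (hu0 N n)
  have hcover : ∀ N, ∀ x ∈ Set.Ico (0:ℝ) 1, x ∈ G N ∨ x ∈ B N := by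
    intro N x hx
    have h2N : (0:ℝ) < 2 ^ N := by positivity
    have hn1 : (⌊x * 2 ^ N⌋₊:ℝ) ≤ x * 2 ^ N := Nat.floor_le (mul_nonneg hx.1 h2N.le)
    have hn2 : x * 2 ^ N < ⌊x * 2 ^ N⌋₊ + 1 := Nat.lt_floor_add_one _
    set n := ⌊x * 2 ^ N⌋₊ with hn
    have hnr : n < 2 ^ N := by
      have : (n:ℝ) < 2 ^ N := by nlinarith [hx.2]
      exact_mod_cast this
    have hxI : x ∈ I N n := by
      constructor
      · rw [div_le_iff₀ h2N]; exact hn1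
      · rw [lt_div_iff₀ h2N]; exact hn2
    by_cases hc : (1 / 2 : ℝ) ^ N < u N n
    · left
      exact Set.mem_biUnion (Finset.mem_coe.2 (Finset.mem_filter.2 ⟨Finset.mem_range.2 hnr, hc⟩)) hxI
    · right
      exact Set.mem_biUnion (Finset.mem_coe.2 (Finset.mem_filter.2 ⟨Finset.mem_range.2 hnr, hc⟩)) hxI
  have hGmeas : ∀ N, MeasurableSet (G N) := fun N =>
    Finset.measurableSet_biUnion _ fun _ _ => measurableSet_Ico
  have hG0 : volume (limsup G atTop) = 0 :=
    measure_limsup_atTop_eq_zero (ne_top_of_le_ne_top hfin (ENNReal.tsum_le_tsum hGv))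
  have hB0 : μ (limsup B atTop) = 0 :=
    measure_limsup_atTop_eq_zero (ne_top_of_le_ne_top hfin (ENNReal.tsum_le_tsum hBμ))
  have hout01 : μ (Set.Ico (0:ℝ) 1)ᶜ = 0 := by
    have hsub : (Set.Ico (0:ℝ) 1)ᶜ ⊆ (Set.Iio 0 ∪ Set.Ioi 1) ∪ {1} := by
      intro y hy
      by_cases h0 : y < 0
      · exact Or.inl (Or.inl h0)
      by_cases h1 : 1 < y
      · exact Or.inl (Or.inr h1)
      right
      by_contra hne
      exact hy ⟨not_lt.1 h0, lt_of_le_of_ne (not_lt.1 h1) hne⟩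
    refine measure_mono_null hsub (measure_union_null ?_ (hatom 1))
    refine hout _ (isOpen_Iio.union isOpen_Ioi) ?_
    rw [Set.disjoint_left]
    rintro y (hy | hy) ⟨h0, h1⟩
    · exact absurd hy (not_lt.2 h0)
    · exact absurd hy (not_lt.2 h1.le)
  refine ⟨(limsup G atTop)ᶜ, (MeasurableSet.measurableSet_limsup hGmeas).compl, ?_, ?_⟩
  · have hsub : (limsup G atTop)ᶜ ⊆ (Set.Ico (0:ℝ) 1)ᶜ ∪ limsup B atTop := by
      intro x hx
      by_cases h01 : x ∈ Set.Ico (0:ℝ) 1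
      · right
        rw [Set.mem_compl_iff, mem_limsup_iff_frequently_mem, not_frequently] at hx
        rw [mem_limsup_iff_frequently_mem]
        exact (hx.mono fun N hN => (hcover N x h01).resolve_left hN).frequently
      · exact Or.inl h01
    exact measure_mono_null hsub (measure_union_null hout01 hB0)
  · rw [compl_compl]
    exact le_antisymm ((Measure.restrict_apply_le _ _).trans hG0.le) zero_le
end
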